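/- There exists a constant c_p > 0 depending only on p such that if ψ̂(0) ≥ c_p·‖ψ‖₂, then for every l ∈ ℕ there is a constant M_{p,l} > 0 (depending only on p, l and ψ) such that ‖k(·,t) − k̂(0,t)‖_{C^l[0,2π]} ≤ M_{p,l}·(T−t)^{(3p−2)/(p+1)} for all t ∈ [0,T), where k̂(0,t) is regarded as a constant function of θ. -/

import Mathlib

open Real MeasureTheory Filter Set

/-- The `n`-th Fourier coefficient of a `2π`-periodic function `f : ℝ → ℝ`:
`f̂(n) = (1/2π) ∫₀^{2π} f(θ) e^{-inθ} dθ`. -/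
noncomputable def fCoeff (f : ℝ → ℝ) (n : ℤ) : ℂ :=
  (1 / (2 * Real.pi)) * ∫ θ in (0:ℝ)..(2 * Real.pi),
    (f θ : ℂ) * Complex.exp (-(Complex.I * n * θ))

/-- The seminorm `‖f‖₂ = max{sup_n n²|Re f̂(n)|, sup_n n²|Im f̂(n)|}`. -/
noncomputable def seminorm2 (f : ℝ → ℝ) : ℝ :=
  max (⨆ n : ℤ, (n : ℝ)^2 * |(fCoeff f n).re|)
      (⨆ n : ℤ, (n : ℝ)^2 * |(fCoeff f n).im|)

/-- The `C^l[0,2π]` norm: `max_{0 ≤ j ≤ l} sup_{θ ∈ [0,2π]} |f^{(j)}(θ)|`. -/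
noncomputable def ClNorm (l : ℕ) (f : ℝ → ℝ) : ℝ :=
  ⨆ j : Fin (l + 1), ⨆ θ : Set.Icc (0:ℝ) (2 * Real.pi),
    |iteratedDeriv (j : ℕ) f (θ : ℝ)|

/-- `k : ℝ × [0,T) → ℝ` is a smooth, `2π`-periodic (in space), strictly positive solution of the
`p`-curve shortening equation
`∂k/∂t = k²(k^{p-1} ∂²k/∂θ² + (p-1) k^{p-2} (∂k/∂θ)² + (1/p) k^p)`
with initial datum `ψ` (smooth, strictly positive, `2π`-periodic), blow-up time `T`
(i.e. `sup_θ k(θ,t) → ∞` as `t → T⁻`), such that `k(·,t)` is the curvature of a simple closed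
convex curve for each `t`, i.e. `∫₀^{2π} e^{iθ}/k(θ,t) dθ = 0`. -/
def IsPCSF (p : ℕ) (T : ℝ) (k : ℝ → ℝ → ℝ) (ψ : ℝ → ℝ) : Prop :=
  ContDiffOn ℝ (⊤ : ℕ∞) (fun q : ℝ × ℝ => k q.1 q.2) (Set.univ ×ˢ Set.Ico 0 T) ∧
  (∀ θ t, k (θ + 2 * Real.pi) t = k θ t) ∧
  (∀ θ : ℝ, ∀ t ∈ Set.Ico (0:ℝ) T, 0 < k θ t) ∧
  (∀ θ : ℝ, ∀ t ∈ Set.Ico (0:ℝ) T,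
    HasDerivAt (fun s => k θ s)
      ((k θ t)^2 * ((k θ t)^(p - 1) * deriv (deriv (fun x => k x t)) θ
        + ((p : ℝ) - 1) * (k θ t)^(p - 2) * (deriv (fun x => k x t) θ)^2
        + (1 / (p : ℝ)) * (k θ t)^p)) t) ∧
  (∀ θ, k θ 0 = ψ θ) ∧
  ContDiff ℝ (⊤ : ℕ∞) ψ ∧ (∀ θ, 0 < ψ θ) ∧ (∀ θ, ψ (θ + 2 * Real.pi) = ψ θ) ∧
  Filter.Tendsto (fun t => ⨆ θ : Set.Icc (0:ℝ) (2 * Real.pi), k (θ : ℝ) t)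
    (nhdsWithin T (Set.Iio T)) Filter.atTop ∧
  (∀ t ∈ Set.Ico (0:ℝ) T,
    (∫ θ in (0:ℝ)..(2 * Real.pi), Complex.exp (Complex.I * θ) / (k θ t)) = 0)

/-- The original time `t` corresponding to the rescaled time `τ`:
`t = T(1 - e^{-(p+1)τ})`, i.e. `τ = -(1/(p+1))·log(1 - t/T)`. -/
noncomputable def tOf (p : ℕ) (T τ : ℝ) : ℝ := T * (1 - Real.exp (-((p : ℝ) + 1) * τ))

/-- The normalized curvature `k̃(θ,τ) = ((p+1)/p)^{1/(p+1)} (T-t)^{1/(p+1)} k(θ,t)`,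
with `t = T(1 - e^{-(p+1)τ})`. -/
noncomputable def ktilde (p : ℕ) (T : ℝ) (k : ℝ → ℝ → ℝ) (θ τ : ℝ) : ℝ :=
  (((p : ℝ) + 1) / (p : ℝ)) ^ ((1 : ℝ) / ((p : ℝ) + 1))
    * (T - tOf p T τ) ^ ((1 : ℝ) / ((p : ℝ) + 1)) * k θ (tOf p T τ)

def Sm (f : ℝ → ℝ) : Prop := ContDiff ℝ (⊤ : ℕ∞) f ∧ ∀ θ, f (θ + 2 * Real.pi) = f θ

lemma Sm.cont {f : ℝ → ℝ} (h : Sm f) : Continuous f := h.1.continuous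
lemma Sm.add {f g : ℝ → ℝ} (hf : Sm f) (hg : Sm g) : Sm (fun θ => f θ + g θ) :=
  ⟨hf.1.add hg.1, fun θ => by simp only [hf.2 θ, hg.2 θ]⟩
lemma Sm.sub {f g : ℝ → ℝ} (hf : Sm f) (hg : Sm g) : Sm (fun θ => f θ - g θ) :=
  ⟨hf.1.sub hg.1, fun θ => by simp only [hf.2 θ, hg.2 θ]⟩
lemma Sm.mul {f g : ℝ → ℝ} (hf : Sm f) (hg : Sm g) : Sm (fun θ => f θ * g θ) :=
  ⟨hf.1.mul hg.1, fun θ => by simp only [hf.2 θ, hg.2 θ]⟩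
lemma Sm.const (c : ℝ) : Sm (fun _ => c) := ⟨contDiff_const, fun _ => rfl⟩
lemma Sm.pow {f : ℝ → ℝ} (hf : Sm f) (p : ℕ) : Sm (fun θ => f θ ^ p) :=
  ⟨hf.1.pow p, fun θ => by simp only [hf.2 θ]⟩
lemma Sm.deriv {f : ℝ → ℝ} (hf : Sm f) : Sm (deriv f) := by
  refine ⟨by simpa using ContDiff.iterate_deriv 1 hf.1, fun θ => ?_⟩
  have : (fun x => f (x + 2 * Real.pi)) = f := funext hf.2
  rw [← deriv_comp_add_const, this]
lemma Sm.iter {f : ℝ → ℝ} (hf : Sm f) (j : ℕ) : Sm (iteratedDeriv j f) := by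
  induction j with
  | zero => simpa using hf
  | succ j ih => rw [iteratedDeriv_succ]; exact ih.deriv
lemma Sm.hasDeriv {f : ℝ → ℝ} (hf : Sm f) (x : ℝ) : HasDerivAt f (_root_.deriv f x) x :=
  (hf.1.differentiable (by simp) x).hasDerivAt

lemma exp_cont (n : ℤ) : Continuous (fun θ : ℝ => Complex.exp (-(Complex.I * n * θ))) := by
  fun_prop

lemma exp_nrm (n : ℤ) (θ : ℝ) : ‖Complex.exp (-(Complex.I * n * θ))‖ = 1 := by
  have : -(Complex.I * n * θ) = ((-(n * θ) : ℝ) : ℂ) * Complex.I := by push_cast; ring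
  rw [this, Complex.norm_exp_ofReal_mul_I]

lemma intble {f : ℝ → ℝ} (hf : Continuous f) (n : ℤ) (a b : ℝ) :
    IntervalIntegrable (fun θ : ℝ => (f θ : ℂ) * Complex.exp (-(Complex.I * n * θ))) volume a b :=
  Continuous.intervalIntegrable (by fun_prop) _ _

lemma fCoeff_add {f g : ℝ → ℝ} (hf : Continuous f) (hg : Continuous g) (n : ℤ) :
    fCoeff (fun θ => f θ + g θ) n = fCoeff f n + fCoeff g n := by
  unfold fCoeff
  rw [← mul_add, ← intervalIntegral.integral_add (intble hf n _ _) (intble hg n _ _)]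
  congr 2; ext θ; push_cast; ring

lemma fCoeff_sub {f g : ℝ → ℝ} (hf : Continuous f) (hg : Continuous g) (n : ℤ) :
    fCoeff (fun θ => f θ - g θ) n = fCoeff f n - fCoeff g n := by
  unfold fCoeff
  rw [← mul_sub, ← intervalIntegral.integral_sub (intble hf n _ _) (intble hg n _ _)]
  congr 2; ext θ; push_cast; ring

lemma fCoeff_smul (c : ℝ) (f : ℝ → ℝ) (n : ℤ) :
    fCoeff (fun θ => c * f θ) n = c * fCoeff f n := by
  unfold fCoeff
  rw [mul_left_comm (c:ℂ)]
  congr 1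
  rw [← intervalIntegral.integral_const_mul]
  exact intervalIntegral.integral_congr fun θ _ => by push_cast; ring

lemma fCoeff_le {f : ℝ → ℝ} {C : ℝ} (h : ∀ θ ∈ Icc (0:ℝ) (2 * Real.pi), |f θ| ≤ C) (n : ℤ) :
    ‖fCoeff f n‖ ≤ C := by
  unfold fCoeff
  have hpi := Real.pi_pos
  have h2 : ‖∫ θ in (0:ℝ)..(2 * Real.pi),
      (f θ : ℂ) * Complex.exp (-(Complex.I * n * θ))‖ ≤ C * |2 * Real.pi - 0| := by
    apply intervalIntegral.norm_integral_le_of_norm_le_const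
    intro x hx
    rw [uIoc_of_le (by positivity)] at hx
    rw [norm_mul, exp_nrm, mul_one, Complex.norm_real]
    exact h x ⟨hx.1.le, hx.2⟩
  rw [norm_mul]
  have h3 : ‖(1 / (2 * (Real.pi:ℂ)))‖ = 1 / (2 * Real.pi) := by
    rw [norm_div, norm_mul, norm_one, Complex.norm_real, Real.norm_of_nonneg hpi.le]; simp
  rw [h3]
  rw [sub_zero, abs_of_pos (by positivity)] at h2
  calc _ ≤ 1 / (2 * Real.pi) * (C * (2 * Real.pi)) := by gcongr
    _ = C := by field_simp

lemma per_exp (n : ℤ) (θ : ℝ) : Complex.exp (-(Complex.I * n * ((θ + 2 * Real.pi : ℝ) : ℂ)))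
    = Complex.exp (-(Complex.I * n * θ)) := by
  have : -(Complex.I * n * ((θ + 2 * Real.pi : ℝ) : ℂ))
    = -(Complex.I * n * θ) + ((-n : ℤ) : ℂ) * (2 * Real.pi * Complex.I) := by push_cast; ring
  rw [this, Complex.exp_add, Complex.exp_int_mul_two_pi_mul_I, mul_one]

lemma fCoeff_deriv {f : ℝ → ℝ} (hf : Sm f) (n : ℤ) :
    fCoeff (deriv f) n = Complex.I * n * fCoeff f n := by
  unfold fCoeff
  have h := intervalIntegral.integral_mul_deriv_eq_deriv_mul
    (a := 0) (b := 2 * Real.pi) (u := fun θ : ℝ => Complex.exp (-(Complex.I * n * θ)))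
    (v := fun θ : ℝ => (f θ : ℂ))
    (u' := fun θ : ℝ => Complex.exp (-(Complex.I * n * θ)) * (-(Complex.I * n)))
    (v' := fun θ : ℝ => ((deriv f θ : ℝ) : ℂ)) ?_ ?_ ?_ ?_
  · have e0 := per_exp n 0
    have f0 := hf.2 0
    rw [zero_add] at e0 f0
    simp only [e0, f0, sub_self, zero_sub] at h
    rw [mul_left_comm (Complex.I * (n:ℂ))]
    congr 1
    rw [← intervalIntegral.integral_const_mul]
    calc _ = ∫ θ in (0:ℝ)..(2 * Real.pi),
          Complex.exp (-(Complex.I * n * θ)) * ((deriv f θ : ℝ) : ℂ) := by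
            exact intervalIntegral.integral_congr fun θ _ => by ring
      _ = _ := by
          rw [h, ← intervalIntegral.integral_neg]
          exact intervalIntegral.integral_congr fun θ _ => by ring
  · intro x _
    have : HasDerivAt (fun θ : ℝ => -(Complex.I * n * (θ:ℂ))) (-(Complex.I * n)) x := by
      have := ((hasDerivAt_id (x:ℂ)).const_mul (Complex.I * n)).neg.comp_ofReal
      simpa using this
    exact this.cexp
  · intro x _
    exact (hf.hasDeriv x).ofReal_comp
  · exact Continuous.intervalIntegrable (by fun_prop) _ _
  · have := hf.deriv.cont
    exact Continuous.intervalIntegrable (by fun_prop) _ _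

lemma fCoeff_iter {f : ℝ → ℝ} (hf : Sm f) (j : ℕ) (n : ℤ) :
    fCoeff (iteratedDeriv j f) n = (Complex.I * n) ^ j * fCoeff f n := by
  induction j with
  | zero => simp
  | succ j ih => rw [iteratedDeriv_succ, fCoeff_deriv (hf.iter j), ih, pow_succ]; ring

lemma fCoeff_one (n : ℤ) : fCoeff (fun _ => (1:ℝ)) n = if n = 0 then 1 else 0 := by
  split_ifs with h
  · subst h
    unfold fCoeff
    have : (Real.pi : ℂ) ≠ 0 := by exact_mod_cast Real.pi_ne_zero
    simp
    field_simp
  · have h1 := fCoeff_deriv (Sm.const 1) n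
    have h2 : fCoeff (deriv fun _ => (1:ℝ)) n = 0 := by
      unfold fCoeff; simp
    rw [h2] at h1
    have : Complex.I * (n:ℂ) ≠ 0 := by simp [h]
    rcases mul_eq_zero.1 h1.symm with h | h
    · exact absurd h this
    · exact h

lemma fCoeff_const (c : ℝ) (n : ℤ) : fCoeff (fun _ => c) n = if n = 0 then (c:ℂ) else 0 := by
  have := fCoeff_smul c (fun _ => (1:ℝ)) n
  rw [fCoeff_one] at this
  simp only [mul_one] at this
  rw [this]; split_ifs <;> simp

noncomputable def jb (n : ℤ) : ℝ := max 1 |(n:ℝ)|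

lemma jb_one_le (n : ℤ) : 1 ≤ jb n := le_max_left _ _
lemma jb_pos (n : ℤ) : 0 < jb n := lt_of_lt_of_le one_pos (jb_one_le n)
lemma jb_zero : jb 0 = 1 := by simp [jb]
lemma abs_le_jb (n : ℤ) : |(n:ℝ)| ≤ jb n := le_max_right _ _
lemma jb_ne {n : ℤ} (h : n ≠ 0) : jb n = |(n:ℝ)| := by
  apply max_eq_right
  have : 1 ≤ |n| := Int.one_le_abs h
  exact_mod_cast this

lemma jb_summable : Summable (fun n : ℤ => (jb n ^ 2)⁻¹) := by
  have h := (Real.summable_one_div_int_pow (p := 2)).2 (by norm_num)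
  have h2 : Summable (fun n : ℤ => if n = 0 then (1:ℝ) else 0) :=
    (hasSum_ite_eq (0:ℤ) (1:ℝ)).summable
  refine Summable.of_nonneg_of_le (fun n => by have := jb_pos n; positivity) (fun n => ?_) (h.add h2)
  by_cases hn : n = 0
  · subst hn; simp [jb_zero]
  · simp [jb_ne hn, hn]

noncomputable def SS : ℝ := ∑' n : ℤ, (jb n ^ 2)⁻¹
lemma SS_nonneg : 0 ≤ SS := tsum_nonneg (fun n => by have := jb_pos n; positivity)
lemma one_le_SS : 1 ≤ SS := by
  have := jb_summable.le_tsum 0 (fun n _ => by have := jb_pos n; positivity)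
  rw [jb_zero] at this
  simpa [SS] using this

noncomputable def nrm (m : ℕ) (f : ℝ → ℝ) : ℝ := ⨆ n : ℤ, jb n ^ m * ‖fCoeff f n‖

lemma bdd_of {f : ℝ → ℝ} (hf : Sm f) (m : ℕ) {C : ℝ}
    (h0 : ∀ θ ∈ Icc (0:ℝ) (2 * Real.pi), |f θ| ≤ C)
    (h1 : ∀ θ ∈ Icc (0:ℝ) (2 * Real.pi), |iteratedDeriv m f θ| ≤ C) (n : ℤ) :
    jb n ^ m * ‖fCoeff f n‖ ≤ C := by
  by_cases hn : n = 0
  · subst hn; rw [jb_zero, one_pow, one_mul]; exact fCoeff_le h0 0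
  · have := fCoeff_le h1 n
    rw [fCoeff_iter hf, norm_mul, norm_pow, norm_mul, Complex.norm_I, one_mul] at this
    rw [jb_ne hn]; simpa using this

lemma nrm_bdd {f : ℝ → ℝ} (hf : Sm f) (m : ℕ) :
    BddAbove (range fun n : ℤ => jb n ^ m * ‖fCoeff f n‖) := by
  obtain ⟨C0, h0⟩ := isCompact_Icc.exists_bound_of_continuousOn (hf.cont.continuousOn (s := Icc (0:ℝ) (2 * Real.pi)))
  obtain ⟨C1, h1⟩ := isCompact_Icc.exists_bound_of_continuousOn ((hf.iter m).cont.continuousOn (s := Icc (0:ℝ) (2 * Real.pi)))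
  refine ⟨max C0 C1, ?_⟩
  rintro _ ⟨n, rfl⟩
  exact bdd_of hf m (fun θ hθ => (h0 θ hθ).trans (le_max_left _ _))
    (fun θ hθ => (h1 θ hθ).trans (le_max_right _ _)) n

lemma le_nrm {f : ℝ → ℝ} (hf : Sm f) (m : ℕ) (n : ℤ) : jb n ^ m * ‖fCoeff f n‖ ≤ nrm m f :=
  le_ciSup (nrm_bdd hf m) n
lemma nrm_le {f : ℝ → ℝ} {m : ℕ} {C : ℝ} (h : ∀ n, jb n ^ m * ‖fCoeff f n‖ ≤ C) : nrm m f ≤ C :=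
  ciSup_le h
lemma nrm_nonneg (f : ℝ → ℝ) (m : ℕ) : 0 ≤ nrm m f :=
  Real.iSup_nonneg fun n => by have := jb_pos n; positivity
lemma coeff_le {f : ℝ → ℝ} (hf : Sm f) (m : ℕ) (n : ℤ) : ‖fCoeff f n‖ ≤ nrm m f * (jb n ^ m)⁻¹ := by
  have := jb_pos n
  rw [← div_eq_mul_inv, le_div_iff₀ (by positivity), mul_comm]
  exact le_nrm hf m n
lemma nrm_mono {f : ℝ → ℝ} (hf : Sm f) {m m' : ℕ} (h : m ≤ m') : nrm m f ≤ nrm m' f :=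
  nrm_le fun n => (mul_le_mul_of_nonneg_right (pow_le_pow_right₀ (jb_one_le n) h)
    (norm_nonneg _)).trans (le_nrm hf m' n)
lemma nrm_add {f g : ℝ → ℝ} (hf : Sm f) (hg : Sm g) (m : ℕ) :
    nrm m (fun θ => f θ + g θ) ≤ nrm m f + nrm m g := nrm_le fun n => by
  rw [fCoeff_add hf.cont hg.cont]
  have := jb_pos n
  calc _ ≤ jb n ^ m * (‖fCoeff f n‖ + ‖fCoeff g n‖) := by gcongr; exact norm_add_le _ _
    _ ≤ _ := by rw [mul_add]; exact add_le_add (le_nrm hf m n) (le_nrm hg m n)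
lemma nrm_sub {f g : ℝ → ℝ} (hf : Sm f) (hg : Sm g) (m : ℕ) :
    nrm m (fun θ => f θ - g θ) ≤ nrm m f + nrm m g := nrm_le fun n => by
  rw [fCoeff_sub hf.cont hg.cont]
  have := jb_pos n
  calc _ ≤ jb n ^ m * (‖fCoeff f n‖ + ‖fCoeff g n‖) := by gcongr; exact norm_sub_le _ _
    _ ≤ _ := by rw [mul_add]; exact add_le_add (le_nrm hf m n) (le_nrm hg m n)
lemma nrm_one (m : ℕ) : nrm m (fun _ => 1) ≤ 1 := nrm_le fun n => by
  rw [fCoeff_one]; split_ifs with h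
  · subst h; simp [jb_zero]
  · simp

lemma coeff_summable {f : ℝ → ℝ} (hf : Sm f) : Summable (fun n : ℤ => ‖fCoeff f n‖) :=
  Summable.of_nonneg_of_le (fun _ => norm_nonneg _) (fun n => coeff_le hf 2 n)
    (jb_summable.mul_left _)

lemma inversion {f : ℝ → ℝ} (hf : Sm f) (θ : ℝ) :
    HasSum (fun n : ℤ => fCoeff f n * Complex.exp (Complex.I * n * θ)) (f θ : ℂ) := by
  have : Fact (0 < 2 * Real.pi) := ⟨by positivity⟩
  have hper : Function.Periodic (fun θ => (f θ : ℂ)) (2 * Real.pi) := fun θ => by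
    simp only [hf.2 θ]
  let F : C(AddCircle (2 * Real.pi), ℂ) := ⟨hper.lift, by
    apply continuous_coinduced_dom.mpr
    have := hf.cont
    show Continuous (fun θ => (f θ : ℂ))
    fun_prop⟩
  have hF : ∀ x : ℝ, F (x : AddCircle (2 * Real.pi)) = f x := fun x => rfl
  have hc : ∀ n, fourierCoeff F n = fCoeff f n := by
    intro n
    rw [fourierCoeff_eq_intervalIntegral _ n 0, zero_add]
    unfold fCoeff
    simp only [hF, fourier_coe_apply, smul_eq_mul]
    rw [Complex.real_smul]
    push_cast
    congr 2; ext x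
    rw [mul_comm]; congr 2
    have : (Real.pi : ℂ) ≠ 0 := by exact_mod_cast Real.pi_ne_zero
    field_simp
  have hs : Summable (fourierCoeff F) := by
    have : fourierCoeff F = fCoeff f := funext hc
    rw [this]; exact (coeff_summable hf).of_norm
  have := has_pointwise_sum_fourier_series_of_summable hs (θ : AddCircle (2 * Real.pi))
  rw [hF] at this
  convert this using 2 with n
  rw [hc, fourier_coe_apply, smul_eq_mul]; congr 2
  have : (Real.pi : ℂ) ≠ 0 := by exact_mod_cast Real.pi_ne_zero
  push_cast
  field_simp

lemma exp_nrm' (n : ℤ) (θ : ℝ) : ‖Complex.exp (Complex.I * n * θ)‖ = 1 := by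
  have := exp_nrm (-n) θ
  simpa using this

lemma fsup_le {f : ℝ → ℝ} (hf : Sm f) (θ : ℝ) : |f θ| ≤ SS * nrm 2 f := by
  have h := inversion hf θ
  have h1 : ‖(f θ : ℂ)‖ ≤ ∑' n : ℤ, nrm 2 f * (jb n ^ 2)⁻¹ := by
    rw [← h.tsum_eq]
    refine tsum_of_norm_bounded (jb_summable.mul_left _).hasSum (fun n => ?_)
    rw [norm_mul, exp_nrm', mul_one]; exact coeff_le hf 2 n
  rw [tsum_mul_left, Complex.norm_real] at h1
  rw [mul_comm]; exact h1

lemma sup_iter_le {f : ℝ → ℝ} (hf : Sm f) (j : ℕ) (θ : ℝ) :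
    |iteratedDeriv j f θ| ≤ SS * nrm (j + 2) f := by
  refine (fsup_le (hf.iter j) θ).trans (mul_le_mul_of_nonneg_left ?_ SS_nonneg)
  refine nrm_le fun n => ?_
  rw [fCoeff_iter hf, norm_mul, norm_pow, norm_mul, Complex.norm_I, one_mul]
  refine le_trans ?_ (le_nrm hf (j+2) n)
  rw [pow_add, mul_comm (jb n ^ j), mul_assoc]
  have := jb_pos n
  have h : ‖(n:ℂ)‖ ≤ jb n := by simpa using abs_le_jb n
  gcongr

lemma conv {f g : ℝ → ℝ} (hf : Sm f) (hg : Sm g) (n : ℤ) :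
    HasSum (fun j : ℤ => fCoeff f (n - j) * fCoeff g j) (fCoeff (fun θ => f θ * g θ) n) := by
  have hfc := hf.cont
  let G : ℤ → ℝ → ℂ := fun j θ =>
    (f θ : ℂ) * Complex.exp (-(Complex.I * ((n - j : ℤ) : ℂ) * θ)) * fCoeff g j
  have hGc : ∀ j, Continuous (G j) := fun j => by
    simp only [G]; fun_prop
  obtain ⟨C, hC⟩ := isCompact_Icc.exists_bound_of_continuousOn (hf.cont.continuousOn (s := Icc (0:ℝ) (2 * Real.pi)))
  have hpi := Real.pi_pos
  have key : HasSum (fun j : ℤ => ∫ θ in (0:ℝ)..(2 * Real.pi), G j θ)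
      (∫ θ in (0:ℝ)..(2 * Real.pi), ((f θ * g θ : ℝ) : ℂ) * Complex.exp (-(Complex.I * n * θ))) := by
    refine intervalIntegral.hasSum_integral_of_dominated_convergence
      (fun j _ => C * ‖fCoeff g j‖) (fun j => (hGc j).aestronglyMeasurable) ?_ ?_ ?_ ?_
    · intro j
      refine Eventually.of_forall fun θ hθ => ?_
      rw [uIoc_of_le (by positivity)] at hθ
      simp only [G]
      rw [norm_mul, norm_mul, exp_nrm, mul_one, Complex.norm_real]
      exact mul_le_mul_of_nonneg_right (hC θ ⟨hθ.1.le, hθ.2⟩) (norm_nonneg _)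
    · exact Eventually.of_forall fun θ _ => (coeff_summable hg).mul_left C
    · exact intervalIntegrable_const
    · refine Eventually.of_forall fun θ _ => ?_
      have := (inversion hg θ).mul_left ((f θ : ℂ) * Complex.exp (-(Complex.I * n * θ)))
      have e2 : ((f θ * g θ : ℝ) : ℂ) * Complex.exp (-(Complex.I * n * θ)) =
        (f θ : ℂ) * Complex.exp (-(Complex.I * n * θ)) * g θ := by push_cast; ring
      rw [e2]
      refine this.congr_fun ?_
      · intro j
        simp only [G]
        have : -(Complex.I * ((n - j : ℤ) : ℂ) * θ) = -(Complex.I * n * θ) + Complex.I * j * θ := by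
          push_cast; ring
        rw [this, Complex.exp_add]; ring
  have := key.mul_left (1 / (2 * (Real.pi : ℂ)))
  refine this.congr_fun fun j => ?_
  simp only [G]
  rw [intervalIntegral.integral_mul_const]
  rw [← mul_assoc]; rfl

lemma jb_split (n j : ℤ) : jb n ≤ 2 * jb (n - j) ∨ jb n ≤ 2 * jb j := by
  by_contra! h
  have h1 : jb n ≤ jb (n - j) + jb j := by
    apply max_le
    · linarith [jb_one_le (n-j), jb_one_le j]
    · have : (n:ℝ) = ((n - j : ℤ) : ℝ) + j := by push_cast; ring
      rw [this]
      exact (abs_add_le _ _).trans (add_le_add (abs_le_jb _) (abs_le_jb _))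
  linarith

lemma nrm_mul {f g : ℝ → ℝ} (hf : Sm f) (hg : Sm g) (m : ℕ) :
    nrm m (fun θ => f θ * g θ) ≤ (2 ^ m * SS) * (nrm m f * nrm 2 g + nrm 2 f * nrm m g) := by
  refine nrm_le fun n => ?_
  have hjn := jb_pos n
  have hs1 : Summable (fun j : ℤ => (jb (n - j) ^ 2)⁻¹) :=
    jb_summable.comp_injective (sub_right_injective (b := n))
  have hs2 : ∑' j : ℤ, (jb (n - j) ^ 2)⁻¹ = SS := by
    exact (Equiv.subLeft n).tsum_eq (fun j : ℤ => (jb j ^ 2)⁻¹)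
  have hb : ‖fCoeff (fun θ => f θ * g θ) n‖ ≤
      ∑' j : ℤ, ((2 ^ m * (jb n ^ m)⁻¹ * (nrm m f * nrm 2 g)) * (jb j ^ 2)⁻¹
        + (2 ^ m * (jb n ^ m)⁻¹ * (nrm 2 f * nrm m g)) * (jb (n - j) ^ 2)⁻¹) := by
    rw [← (conv hf hg n).tsum_eq]
    refine tsum_of_norm_bounded ((jb_summable.mul_left _).add (hs1.mul_left _)).hasSum (fun j => ?_)
    rw [norm_mul]
    have a1 := coeff_le hf m (n - j)
    have a2 := coeff_le hf 2 (n - j)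
    have b1 := coeff_le hg m j
    have b2 := coeff_le hg 2 j
    have p1 := nrm_nonneg f m
    have p2 := nrm_nonneg f 2
    have p3 := nrm_nonneg g m
    have p4 := nrm_nonneg g 2
    have hj1 := jb_pos (n - j)
    have hj2 := jb_pos j
    have inv : ∀ i : ℤ, jb n ≤ 2 * jb i → (jb i ^ m)⁻¹ ≤ 2 ^ m * (jb n ^ m)⁻¹ := by
      intro i hi
      have hji := jb_pos i
      have := pow_le_pow_left₀ hjn.le hi m
      rw [mul_pow] at this
      rw [← div_eq_mul_inv, le_div_iff₀ (by positivity), inv_mul_le_iff₀ (by positivity)]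
      linarith
    rcases jb_split n j with h | h
    · calc _ ≤ (nrm m f * (jb (n - j) ^ m)⁻¹) * (nrm 2 g * (jb j ^ 2)⁻¹) := by gcongr
        _ ≤ (nrm m f * (2 ^ m * (jb n ^ m)⁻¹)) * (nrm 2 g * (jb j ^ 2)⁻¹) := by
          gcongr; exact inv _ h
        _ = (2 ^ m * (jb n ^ m)⁻¹ * (nrm m f * nrm 2 g)) * (jb j ^ 2)⁻¹ + 0 := by ring
        _ ≤ _ := by gcongr; positivity
    · calc _ ≤ (nrm 2 f * (jb (n - j) ^ 2)⁻¹) * (nrm m g * (jb j ^ m)⁻¹) := by gcongr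
        _ ≤ (nrm 2 f * (jb (n - j) ^ 2)⁻¹) * (nrm m g * (2 ^ m * (jb n ^ m)⁻¹)) := by
          gcongr; exact inv _ h
        _ = 0 + (2 ^ m * (jb n ^ m)⁻¹ * (nrm 2 f * nrm m g)) * (jb (n - j) ^ 2)⁻¹ := by ring
        _ ≤ _ := by gcongr; positivity
  rw [(jb_summable.mul_left _).tsum_add (hs1.mul_left _), tsum_mul_left, tsum_mul_left, hs2] at hb
  change _ ≤ _ * SS + _ at hb
  refine (mul_le_mul_of_nonneg_left hb (by positivity : 0 ≤ jb n ^ m)).trans (le_of_eq ?_)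
  field_simp

lemma nrm_two_mul {f g : ℝ → ℝ} (hf : Sm f) (hg : Sm g) {m : ℕ} (hm : 2 ≤ m) :
    nrm 2 (fun θ => f θ * g θ) ≤ 2 * (2 ^ m * SS) * (nrm 2 f * nrm 2 g) := by
  have h := nrm_mul hf hg 2
  have h2 : (2:ℝ) ^ 2 * SS ≤ 2 ^ m * SS :=
    mul_le_mul_of_nonneg_right (pow_le_pow_right₀ (by norm_num) hm) SS_nonneg
  have := mul_nonneg (nrm_nonneg f 2) (nrm_nonneg g 2)
  nlinarith

lemma alg1 {m : ℕ} (hm : 2 ≤ m) {ε κ : ℝ → ℝ} (he : Sm ε) (hk : Sm κ)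
    (h : ∀ θ, κ θ * (1 + ε θ) = 1) (hs : nrm 2 ε ≤ 1 / (4 * (2 ^ m * SS))) :
    nrm m (fun θ => ε θ * κ θ) ≤ 5 * (2 ^ m * SS) * nrm m ε ∧
    nrm 2 (fun θ => ε θ * κ θ) ≤ 4 * (2 ^ m * SS) * nrm 2 ε ∧ nrm 2 κ ≤ 2 := by
  set D : ℝ := 2 ^ m * SS with hD
  have hD1 : 1 ≤ D := by
    have : (1:ℝ) ≤ 2 ^ m := one_le_pow₀ (by norm_num)
    nlinarith [one_le_SS]
  have hD0 : 0 < D := by linarith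
  have ha : 4 * D * nrm 2 ε ≤ 1 := by
    rw [le_div_iff₀ (by positivity)] at hs; linarith
  have e0 := nrm_nonneg ε 2
  have e1 := nrm_nonneg ε m
  have k0 := nrm_nonneg κ 2
  have k1 := nrm_nonneg κ m
  have hmono := nrm_mono he hm
  have hκ : κ = fun θ => 1 - ε θ * κ θ := by
    ext θ; linarith [h θ]
  have hek := he.mul hk
  have s2 := nrm_two_mul he hk hm
  have sm := nrm_mul he hk m
  rw [← hD] at s2 sm
  have t2 : nrm 2 κ ≤ 1 + nrm 2 (fun θ => ε θ * κ θ) := by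
    calc nrm 2 κ = nrm 2 (fun θ => 1 - ε θ * κ θ) := by rw [← hκ]
      _ ≤ _ := (nrm_sub (Sm.const 1) hek 2).trans (by linarith [nrm_one 2])
  have tm : nrm m κ ≤ 1 + nrm m (fun θ => ε θ * κ θ) := by
    calc nrm m κ = nrm m (fun θ => 1 - ε θ * κ θ) := by rw [← hκ]
      _ ≤ _ := (nrm_sub (Sm.const 1) hek m).trans (by linarith [nrm_one m])
  have u2 : nrm 2 κ ≤ 2 := by nlinarith [mul_le_mul_of_nonneg_right ha k0]
  have um : nrm m κ ≤ 2 + 4 * D * nrm m ε := by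
    nlinarith [mul_le_mul_of_nonneg_right ha k1, mul_nonneg hD0.le e1,
      mul_le_mul_of_nonneg_left u2 (mul_nonneg hD0.le e1)]
  refine ⟨?_, ?_, u2⟩
  · have w1 : nrm m ε * nrm 2 κ ≤ nrm m ε * 2 := by gcongr
    have w2 : nrm 2 ε * nrm m κ ≤ nrm 2 ε * (2 + 4 * D * nrm m ε) := by gcongr
    have w3 : 4 * D * nrm 2 ε * nrm m ε ≤ nrm m ε := by nlinarith
    calc _ ≤ _ := sm
      _ ≤ D * (5 * nrm m ε) := by gcongr; nlinarith
      _ = _ := by ring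
  · calc _ ≤ _ := s2
      _ ≤ 2 * D * (nrm 2 ε * 2) := by gcongr
      _ = _ := by ring

lemma alg2 (p : ℕ) {m : ℕ} (hm : 2 ≤ m) : ∃ A : ℝ, 0 ≤ A ∧ ∀ ε κ : ℝ → ℝ, Sm ε → Sm κ →
    (∀ θ, κ θ * (1 + ε θ) = 1) → nrm 2 ε ≤ 1 / (4 * (2 ^ m * SS)) →
    nrm m (fun θ => κ θ ^ p - 1) ≤ A * nrm m ε ∧ nrm 2 (fun θ => κ θ ^ p - 1) ≤ A * nrm 2 ε ∧
    nrm m (fun θ => κ θ ^ p - 1 + p * ε θ) ≤ A * nrm 2 ε * nrm m ε := by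
  have hz : ∀ m, nrm m (fun _ => 0) ≤ 0 := fun m => nrm_le fun n => by
    rw [fCoeff_const]; simp
  induction p with
  | zero =>
    refine ⟨0, le_rfl, fun ε κ he hk h hs => ?_⟩
    simp only [pow_zero, sub_self, zero_mul, Nat.cast_zero, zero_add]
    exact ⟨hz m, hz 2, hz m⟩
  | succ p ih =>
    obtain ⟨A, hA, ih⟩ := ih
    set D : ℝ := 2 ^ m * SS with hD
    have hD1 : 1 ≤ D := by
      have : (1:ℝ) ≤ 2 ^ m := one_le_pow₀ (by norm_num)
      nlinarith [one_le_SS]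
    have hD0 : 0 < D := by linarith
    refine ⟨A + 5 * D + 9 * D ^ 2 * (1 + A), by positivity, fun ε κ he hk h hs => ?_⟩
    obtain ⟨i1, i2, i3⟩ := ih ε κ he hk h hs
    obtain ⟨s1, s2, -⟩ := alg1 hm he hk h hs
    have ha : 4 * D * nrm 2 ε ≤ 1 := by
      rw [le_div_iff₀ (by positivity)] at hs; linarith
    have e0 := nrm_nonneg ε 2
    have e1 := nrm_nonneg ε m
    have hek := he.mul hk
    have hd : Sm (fun θ => κ θ ^ p - 1) := (hk.pow p).sub (Sm.const 1)
    have hpe : Sm (fun θ => (p:ℝ) * ε θ) := (Sm.const (p:ℝ)).mul he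
    have hq : Sm (fun θ => κ θ ^ p - 1 + p * ε θ) := hd.add hpe
    have hκ : ∀ θ, κ θ = 1 - ε θ * κ θ := fun θ => by linarith [h θ]
    have d_eq : (fun θ => κ θ ^ (p+1) - 1) =
        fun θ => (κ θ ^ p - 1) - (ε θ * κ θ + (κ θ ^ p - 1) * (ε θ * κ θ)) := by
      ext θ
      have := hκ θ
      rw [pow_succ]
      linear_combination (κ θ ^ p) * this
    have q_eq : (fun θ => κ θ ^ (p+1) - 1 + ((p+1 : ℕ):ℝ) * ε θ) =
        fun θ => (κ θ ^ p - 1 + p * ε θ) + (ε θ - (κ θ ^ p - 1)) * (ε θ * κ θ) := by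
      ext θ
      have := hκ θ
      rw [pow_succ]
      push_cast
      linear_combination (κ θ ^ p - ε θ) * this
    have hed := he.sub hd
    have ae : D * nrm 2 ε ≤ 1 := by linarith
    rw [d_eq, q_eq]
    have n1 := nrm_mul hd hek m
    have n2 := nrm_two_mul hd hek hm
    have n3 := nrm_mul hed hek m
    have x1 := nrm_nonneg (fun θ => κ θ ^ p - 1) m
    have x2 := nrm_nonneg (fun θ => κ θ ^ p - 1) 2
    have y1 := nrm_nonneg (fun θ => ε θ * κ θ) m
    have y2 := nrm_nonneg (fun θ => ε θ * κ θ) 2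
    have z1 := nrm_sub he hd m
    have z2 := nrm_sub he hd 2
    have z1' := nrm_nonneg (fun θ => ε θ - (κ θ ^ p - 1)) m
    have z2' := nrm_nonneg (fun θ => ε θ - (κ θ ^ p - 1)) 2
    simp only [← hD] at *
    refine ⟨?_, ?_, ?_⟩
    · refine (nrm_sub hd (hek.add (hd.mul hek)) m).trans ?_
      have := nrm_add hek (hd.mul hek) m
      have b : nrm m (fun θ => (κ θ ^ p - 1) * (ε θ * κ θ)) ≤ 9 * D * A * nrm m ε := by
        calc _ ≤ _ := n1
          _ ≤ D * ((A * nrm m ε) * (4 * D * nrm 2 ε) + (A * nrm 2 ε) * (5 * D * nrm m ε)) := by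
            gcongr
          _ = (9 * D * A * nrm m ε) * (D * nrm 2 ε) := by ring
          _ ≤ (9 * D * A * nrm m ε) * 1 := by gcongr
          _ = _ := by ring
      have : 9 * D * A * nrm m ε ≤ 9 * D ^ 2 * (1 + A) * nrm m ε := by
        gcongr 9 * ?_ * ?_ * _
        · nlinarith
        · linarith
      linarith
    · refine (nrm_sub hd (hek.add (hd.mul hek)) 2).trans ?_
      have := nrm_add hek (hd.mul hek) 2
      have b : nrm 2 (fun θ => (κ θ ^ p - 1) * (ε θ * κ θ)) ≤ 9 * D * A * nrm 2 ε := by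
        calc _ ≤ _ := n2
          _ ≤ 2 * D * ((A * nrm 2 ε) * (4 * D * nrm 2 ε)) := by
            gcongr
          _ = (8 * D * A * nrm 2 ε) * (D * nrm 2 ε) := by ring
          _ ≤ (8 * D * A * nrm 2 ε) * 1 := by gcongr
          _ ≤ _ := by nlinarith [mul_nonneg (mul_nonneg hD0.le hA) e0]
      have : 9 * D * A * nrm 2 ε ≤ 9 * D ^ 2 * (1 + A) * nrm 2 ε := by
        gcongr 9 * ?_ * ?_ * _
        · nlinarith
        · linarith
      nlinarith [mul_nonneg hD0.le e0]
    · refine (nrm_add hq (hed.mul hek) m).trans ?_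
      have b : nrm m (fun θ => (ε θ - (κ θ ^ p - 1)) * (ε θ * κ θ)) ≤
          9 * D ^ 2 * (1 + A) * nrm 2 ε * nrm m ε := by
        calc _ ≤ _ := n3
          _ ≤ D * ((nrm m ε + A * nrm m ε) * (4 * D * nrm 2 ε)
              + (nrm 2 ε + A * nrm 2 ε) * (5 * D * nrm m ε)) := by
            gcongr
            · linarith
            · linarith
          _ = _ := by ring
      nlinarith [mul_nonneg (mul_nonneg hD0.le e0) e1]

lemma alg (p : ℕ) {m : ℕ} (hm : 2 ≤ m) : ∃ δ > (0:ℝ), ∃ C ≥ (1:ℝ), ∀ ε κ : ℝ → ℝ, Sm ε → Sm κ →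
    (∀ θ, κ θ * (1 + ε θ) = 1) → nrm 2 ε ≤ δ →
    nrm m (fun θ => κ θ - 1) ≤ C * nrm m ε ∧
    nrm m (fun θ => κ θ ^ p - 1 + p * ε θ) ≤ C * nrm 2 ε * nrm m ε ∧ nrm 2 κ ≤ 2 := by
  obtain ⟨A, hA, h2⟩ := alg2 p hm
  have hS := one_le_SS
  set D : ℝ := 2 ^ m * SS with hD
  have hD0 : 0 < D := by positivity
  refine ⟨1 / (4 * D), by positivity, 1 + A + 5 * D, by linarith, fun ε κ he hk h hs => ?_⟩
  obtain ⟨s1, s2, s3⟩ := alg1 hm he hk h hs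
  obtain ⟨i1, i2, i3⟩ := h2 ε κ he hk h hs
  have e0 := nrm_nonneg ε 2
  have e1 := nrm_nonneg ε m
  refine ⟨?_, ?_, s3⟩
  · have hκ : (fun θ => κ θ - 1) = fun θ => 0 - ε θ * κ θ := by ext θ; linarith [h θ]
    rw [hκ]
    refine (nrm_sub (Sm.const 0) (he.mul hk) m).trans ?_
    have hz : nrm m (fun _ => 0) ≤ 0 := nrm_le fun n => by
      rw [fCoeff_const]; simp
    nlinarith
  · refine i3.trans ?_
    gcongr
    linarith

def SmT (T : ℝ) (k : ℝ → ℝ → ℝ) : Prop :=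
  ContDiffOn ℝ (⊤ : ℕ∞) (fun q : ℝ × ℝ => k q.1 q.2) (Set.univ ×ˢ Set.Ico 0 T) ∧
  ∀ θ, ∀ t ∈ Ico (0:ℝ) T, k (θ + 2 * Real.pi) t = k θ t

lemma SmT.sm {T : ℝ} {k : ℝ → ℝ → ℝ} (h : SmT T k) {t : ℝ} (ht : t ∈ Ico (0:ℝ) T) :
    Sm (fun θ => k θ t) := by
  refine ⟨?_, fun θ => h.2 θ t ht⟩
  have : ContDiffOn ℝ (⊤ : ℕ∞) ((fun q : ℝ × ℝ => k q.1 q.2) ∘ fun θ : ℝ => (θ, t)) univ :=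
    h.1.comp (by fun_prop) (fun θ _ => ⟨mem_univ _, ht⟩)
  exact contDiffOn_univ.1 this

lemma SmT.deriv {T : ℝ} {k : ℝ → ℝ → ℝ} (h : SmT T k) :
    SmT T (fun θ t => deriv (fun x => k x t) θ) := by
  refine ⟨?_, fun θ t ht => (h.sm ht).deriv.2 θ⟩
  rcases le_or_gt T 0 with hT | hT
  · rw [Ico_eq_empty (by linarith)]; simp
  have hu : UniqueDiffOn ℝ ((univ : Set ℝ) ×ˢ Ico (0:ℝ) T) :=
    uniqueDiffOn_univ.prod (uniqueDiffOn_Ico 0 T)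
  have h1 : ContDiffOn ℝ (⊤ : ℕ∞) (fderivWithin ℝ (fun q : ℝ × ℝ => k q.1 q.2)
      ((univ : Set ℝ) ×ˢ Ico (0:ℝ) T)) ((univ : Set ℝ) ×ˢ Ico (0:ℝ) T) :=
    h.1.fderivWithin hu (by simp)
  have h2 : ContDiffOn ℝ (⊤ : ℕ∞) (fun q => fderivWithin ℝ (fun q : ℝ × ℝ => k q.1 q.2)
      ((univ : Set ℝ) ×ˢ Ico (0:ℝ) T) q (1, 0)) ((univ : Set ℝ) ×ˢ Ico (0:ℝ) T) :=
    h1.clm_apply contDiffOn_const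
  refine h2.congr fun q hq => ?_
  have hd := ((h.1.differentiableOn (by simp)) q hq).hasFDerivWithinAt
  have hl : HasDerivAt (fun θ : ℝ => (θ, q.2)) ((1:ℝ), (0:ℝ)) q.1 :=
    (hasDerivAt_id q.1).prodMk (hasDerivAt_const _ _)
  have hl' := hl.hasDerivWithinAt (s := univ)
  have := HasFDerivWithinAt.comp_hasDerivWithinAt (t := (univ : Set ℝ) ×ˢ Ico (0:ℝ) T) q.1 hd hl'
    (fun θ _ => ⟨mem_univ _, hq.2⟩)
  rw [hasDerivWithinAt_univ] at this
  exact this.deriv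

lemma SmT.iter {T : ℝ} {k : ℝ → ℝ → ℝ} (h : SmT T k) (j : ℕ) :
    SmT T (fun θ t => iteratedDeriv j (fun x => k x t) θ) := by
  induction j with
  | zero => simpa using h
  | succ j ih => simp only [iteratedDeriv_succ]; exact ih.deriv

lemma SmT.bound {T : ℝ} {k : ℝ → ℝ → ℝ} (h : SmT T k) {t1 : ℝ} (ht1 : t1 < T) :
    ∃ C, ∀ t ∈ Icc (0:ℝ) t1, ∀ θ ∈ Icc (0:ℝ) (2 * Real.pi), |k θ t| ≤ C := by
  have hc : ContinuousOn (fun q : ℝ × ℝ => k q.1 q.2) (Icc (0:ℝ) (2 * Real.pi) ×ˢ Icc (0:ℝ) t1) :=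
    h.1.continuousOn.mono fun q hq => ⟨mem_univ _, hq.2.1, hq.2.2.trans_lt ht1⟩
  obtain ⟨C, hC⟩ := (isCompact_Icc.prod isCompact_Icc).exists_bound_of_continuousOn hc
  exact ⟨C, fun t ht θ hθ => hC (θ, t) ⟨hθ, ht⟩⟩

lemma SmT.unif {T : ℝ} {k : ℝ → ℝ → ℝ} (h : SmT T k) {t1 : ℝ} (ht1 : t1 < T) (m : ℕ) :
    ∃ C, ∀ t ∈ Icc (0:ℝ) t1, nrm m (fun θ => k θ t) ≤ C := by
  obtain ⟨C0, h0⟩ := h.bound ht1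
  obtain ⟨C1, h1⟩ := (h.iter m).bound ht1
  exact ⟨max C0 C1, fun t ht => nrm_le fun n => bdd_of (h.sm ⟨ht.1, ht.2.trans_lt ht1⟩) m
    (fun θ hθ => (h0 t ht θ hθ).trans (le_max_left _ _))
    (fun θ hθ => (h1 t ht θ hθ).trans (le_max_right _ _)) n⟩

lemma SmT.contT {T : ℝ} {k : ℝ → ℝ → ℝ} (h : SmT T k) (θ : ℝ) :
    ContinuousOn (fun t => k θ t) (Ico 0 T) :=
  h.1.continuousOn.comp (f := fun t : ℝ => (θ, t)) (by fun_prop) (fun t ht => ⟨mem_univ _, ht⟩)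

lemma SmT.coeff_cont {T : ℝ} {k : ℝ → ℝ → ℝ} (h : SmT T k) (n : ℤ) :
    ContinuousOn (fun t => fCoeff (fun θ => k θ t) n) (Ico 0 T) := by
  intro t ht
  unfold fCoeff
  refine ContinuousWithinAt.mul continuousWithinAt_const ?_
  obtain ⟨t1, h1, h2⟩ := exists_between ht.2
  obtain ⟨C, hC⟩ := h.bound h2
  have hpi := Real.pi_pos
  have hev : ∀ᶠ s in nhdsWithin t (Ico 0 T), s ∈ Icc 0 t1 := by
    filter_upwards [self_mem_nhdsWithin, nhdsWithin_le_nhds (Iio_mem_nhds h1)] with s a b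
    exact ⟨a.1, le_of_lt b⟩
  refine intervalIntegral.continuousWithinAt_of_dominated_interval (bound := fun _ => C) ?_ ?_
    intervalIntegrable_const ?_
  · filter_upwards [self_mem_nhdsWithin] with s hs
    have := (h.sm hs).cont
    exact Continuous.aestronglyMeasurable (by fun_prop)
  · filter_upwards [hev] with s hs
    refine Eventually.of_forall fun θ hθ => ?_
    rw [uIoc_of_le (by positivity)] at hθ
    rw [norm_mul, exp_nrm, mul_one, Complex.norm_real]
    exact hC s hs θ ⟨hθ.1.le, hθ.2⟩
  · refine Eventually.of_forall fun θ hθ => ?_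
    refine ContinuousWithinAt.mul ?_ continuousWithinAt_const
    exact Complex.continuous_ofReal.continuousAt.comp_continuousWithinAt (h.contT θ t ht)

lemma SmT.coeff_deriv {T : ℝ} {k k' : ℝ → ℝ → ℝ} (h : SmT T k) (h' : SmT T k')
    (hd : ∀ θ, ∀ t ∈ Ioo (0:ℝ) T, HasDerivAt (fun s => k θ s) (k' θ t) t) (n : ℤ)
    {t : ℝ} (ht : t ∈ Ioo (0:ℝ) T) :
    HasDerivAt (fun t => fCoeff (fun θ => k θ t) n) (fCoeff (fun θ => k' θ t) n) t := by
  unfold fCoeff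
  refine HasDerivAt.const_mul _ ?_
  obtain ⟨t1, h1, h2⟩ := exists_between ht.2
  obtain ⟨C, hC⟩ := h'.bound h2
  have hpi := Real.pi_pos
  have cs := (h.sm ⟨ht.1.le, ht.2⟩).cont
  have cs' := (h'.sm ⟨ht.1.le, ht.2⟩).cont
  refine (intervalIntegral.hasDerivAt_integral_of_dominated_loc_of_deriv_le (𝕜 := ℝ)
    (F := fun s θ => (k θ s : ℂ) * Complex.exp (-(Complex.I * n * θ)))
    (F' := fun s θ => (k' θ s : ℂ) * Complex.exp (-(Complex.I * n * θ)))
    (s := Ioo 0 t1) (bound := fun _ => C)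
    (Ioo_mem_nhds ht.1 h1) ?_ ?_ ?_ ?_ intervalIntegrable_const ?_).2
  · filter_upwards [Ioo_mem_nhds ht.1 ht.2] with s hs
    have := (h.sm ⟨hs.1.le, hs.2⟩).cont
    exact Continuous.aestronglyMeasurable (by fun_prop)
  · exact intble cs n _ _
  · exact Continuous.aestronglyMeasurable (by fun_prop)
  · refine Eventually.of_forall fun θ hθ s hs => ?_
    rw [uIoc_of_le (by positivity)] at hθ
    rw [norm_mul, exp_nrm, mul_one, Complex.norm_real]
    exact hC s ⟨hs.1.le, hs.2.le⟩ θ ⟨hθ.1.le, hθ.2⟩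
  · refine Eventually.of_forall fun θ hθ s hs => ?_
    exact (hd θ s ⟨hs.1, hs.2.trans h2⟩).ofReal_comp.mul_const _

/-- scalar comparison -/
lemma scal {x a x' : ℝ → ℝ} {t0 t1 β : ℝ} (hc : ContinuousOn x (Icc t0 t1))
    (hd : ∀ t ∈ Ioo t0 t1, HasDerivAt x (x' t) t) (ha : ∀ t ∈ Ioo t0 t1, 0 ≤ a t)
    (hle : ∀ t ∈ Ioo t0 t1, x' t ≤ a t * (β - x t)) (h0 : x t0 ≤ β) :
    ∀ t ∈ Ico t0 t1, x t ≤ β := by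
  intro t ht
  by_contra! hlt
  have ht0 : t0 < t := lt_of_le_of_ne ht.1 (fun h => by subst h; linarith)
  have hc' : ContinuousOn x (Icc t0 t) := hc.mono (Icc_subset_Icc_right ht.2.le)
  -- the last point where x ≤ β
  let A : Set ℝ := {s ∈ Icc t0 t | x s ≤ β}
  have hA : IsClosed A := hc'.preimage_isClosed_of_isClosed isClosed_Icc isClosed_Iic
  have hAne : A.Nonempty := ⟨t0, ⟨le_rfl, ht.1⟩, h0⟩
  have hAb : BddAbove A := ⟨t, fun s hs => hs.1.2⟩
  have hs := hA.csSup_mem hAne hAb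
  set s := sSup A
  have hst : s < t := lt_of_le_of_ne hs.1.2 (fun h => by have := hs.2; rw [h] at this; linarith)
  have hgt : ∀ u ∈ Ioo s t, β < x u := by
    intro u hu
    by_contra! hcon
    exact absurd (le_csSup hAb (⟨⟨hs.1.1.trans hu.1.le, hu.2.le⟩, hcon⟩ : u ∈ A)) (not_le.2 hu.1)
  have hanti : AntitoneOn x (Icc s t) := by
    apply antitoneOn_of_deriv_nonpos (convex_Icc s t) (hc'.mono (Icc_subset_Icc_left hs.1.1))
    · intro u hu
      rw [interior_Icc] at hu
      exact (hd u ⟨hs.1.1.trans_lt hu.1, hu.2.trans ht.2⟩).differentiableAt.differentiableWithinAt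
    · intro u hu
      rw [interior_Icc] at hu
      have hu' : u ∈ Ioo t0 t1 := ⟨hs.1.1.trans_lt hu.1, hu.2.trans ht.2⟩
      rw [(hd u hu').deriv]
      nlinarith [hle u hu', ha u hu', hgt u hu]
  have := hanti ⟨le_rfl, hst.le⟩ ⟨hst.le, le_rfl⟩ hst.le
  linarith [hs.2]

/-- complex comparison -/
lemma cplx {g F : ℝ → ℂ} {a : ℝ → ℝ} {t0 t1 β : ℝ} (hc : ContinuousOn g (Icc t0 t1))
    (hd : ∀ t ∈ Ioo t0 t1, HasDerivAt g (-(a t : ℂ) * g t + F t) t) (ha : ∀ t ∈ Ioo t0 t1, 0 ≤ a t)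
    (hF : ∀ t ∈ Ioo t0 t1, ‖F t‖ ≤ a t * β) (h0 : ‖g t0‖ ≤ β) :
    ∀ t ∈ Ico t0 t1, ‖g t‖ ≤ β := by
  intro t ht
  obtain ⟨z, hz1, hz2⟩ : ∃ z : ℂ, ‖z‖ ≤ 1 ∧ (z * g t).re = ‖g t‖ := by
    by_cases h : g t = 0
    · exact ⟨1, by simp, by simp [h]⟩
    · refine ⟨(starRingEnd ℂ) (g t) / ‖g t‖, ?_, ?_⟩
      · have : ‖g t‖ ≠ 0 := norm_ne_zero_iff.2 h
        simp [this]
      · have : (‖g t‖ : ℂ) ≠ 0 := by exact_mod_cast norm_ne_zero_iff.2 h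
        rw [div_mul_eq_mul_div, mul_comm, Complex.mul_conj, Complex.normSq_eq_norm_sq]
        push_cast
        rw [pow_two, mul_div_assoc, div_self this, mul_one, Complex.ofReal_re]
  rw [← hz2]
  have hre : ∀ w : ℂ, (z * w).re ≤ ‖w‖ := fun w =>
    (Complex.re_le_norm _).trans (by
      rw [norm_mul]; exact mul_le_of_le_one_left (norm_nonneg _) hz1)
  refine scal (x := fun s => (z * g s).re) (a := a)
    (x' := fun s => (z * (-(a s : ℂ) * g s + F s)).re) ?_ ?_ ha ?_ ((hre _).trans h0) t ht
  · exact Complex.continuous_re.comp_continuousOn (continuousOn_const.mul hc)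
  · intro s hs
    have := ((hd s hs).const_mul z)
    exact (Complex.reCLM.hasFDerivAt.comp_hasDerivAt s this)
  · intro s hs
    have e : (z * (-(a s : ℂ) * g s + F s)).re = -(a s) * (z * g s).re + (z * F s).re := by
      rw [← Complex.re_ofReal_mul, ← Complex.add_re]; congr 1; push_cast; ring
    rw [e]
    have := (hre (F s)).trans (hF s hs)
    linarith

/-- family comparison -/
lemma famcmp {ι : Type} {g F : ι → ℝ → ℂ} {a : ι → ℝ → ℝ} {t0 t1 B0 K : ℝ}
    (hc : ∀ n, ContinuousOn (g n) (Icc t0 t1))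
    (hd : ∀ n, ∀ t ∈ Ioo t0 t1, HasDerivAt (g n) (-(a n t : ℂ) * g n t + F n t) t)
    (ha : ∀ n, ∀ t ∈ Ioo t0 t1, 0 ≤ a n t)
    (hF : ∀ t ∈ Ioo t0 t1, ∀ G, (∀ n, ‖g n t‖ ≤ G) → ∀ n, ‖F n t‖ ≤ a n t * (G / 2))
    (hK : ∀ n, ∀ t ∈ Icc t0 t1, ‖g n t‖ ≤ K)
    (h0 : ∀ n, ‖g n t0‖ ≤ B0) (hB0 : 0 ≤ B0) :
    ∀ n, ∀ t ∈ Ico t0 t1, ‖g n t‖ ≤ B0 := by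
  have key : ∀ j : ℕ, ∀ n, ∀ t ∈ Ico t0 t1, ‖g n t‖ ≤ max B0 (K / 2 ^ j) := by
    intro j
    induction j with
    | zero => intro n t ht; simpa using Or.inr (hK n t ⟨ht.1, ht.2.le⟩)
    | succ j ih =>
      intro n
      refine cplx (hc n) (hd n) (ha n) (fun t ht => ?_) ((h0 n).trans (le_max_left _ _))
      refine (hF t ht _ (fun n => ih n t ⟨ht.1.le, ht.2⟩) n).trans ?_
      refine mul_le_mul_of_nonneg_left ?_ (ha n t ht)
      rcases max_cases B0 (K / 2 ^ j) with ⟨h, _⟩ | ⟨h, _⟩ <;> rw [h]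
      · exact le_trans (by linarith) (le_max_left _ _)
      · refine le_trans (le_of_eq ?_) (le_max_right _ _)
        rw [pow_succ]; field_simp
  intro n t ht
  have hlim : Tendsto (fun j : ℕ => max B0 (K / 2 ^ j)) atTop (nhds (max B0 0)) := by
    refine tendsto_const_nhds.max ?_
    have := (tendsto_pow_atTop_nhds_zero_of_lt_one (r := (1/2:ℝ)) (by norm_num) (by norm_num)).const_mul K
    simp only [mul_zero] at this
    refine this.congr fun j => ?_
    rw [one_div, inv_pow]; rfl
  rw [max_eq_left hB0] at hlim
  exact ge_of_tendsto' hlim fun j => key j n t ht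

lemma boot {Q : ℝ → Prop} {T : ℝ} (h0 : Q 0)
    (hcl : ∀ x ∈ Ioo 0 T, (∀ s ∈ Ico 0 x, Q s) → Q x)
    (hop : ∀ x ∈ Ico 0 T, (∀ s ∈ Icc 0 x, Q s) → ∀ᶠ y in nhdsWithin x (Ioi x), Q y) :
    ∀ t ∈ Ico 0 T, Q t := by
  by_contra! hcon
  obtain ⟨t, ht, hQ⟩ := hcon
  let A : Set ℝ := {s ∈ Ico 0 T | ¬ Q s}
  have hAb : BddBelow A := ⟨0, fun s hs => hs.1.1⟩
  have hAne : A.Nonempty := ⟨t, ht, hQ⟩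
  set x := sInf A with hx
  have hx0 : 0 ≤ x := le_csInf hAne fun s hs => hs.1.1
  have hxt : x ≤ t := csInf_le hAb ⟨ht, hQ⟩
  have hxT : x < T := hxt.trans_lt ht.2
  have hlt : ∀ s ∈ Ico 0 x, Q s := fun s hs => by
    by_contra hn
    exact absurd (csInf_le hAb (⟨⟨hs.1, hs.2.trans hxT⟩, hn⟩ : s ∈ A)) (not_le.2 hs.2)
  have hQx : Q x := by
    rcases hx0.eq_or_lt with h | h
    · rw [← h]; exact h0
    · exact hcl x ⟨h, hxT⟩ hlt
  have hev := hop x ⟨hx0, hxT⟩ fun s hs => by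
    rcases hs.2.eq_or_lt with h | h
    · rw [h]; exact hQx
    · exact hlt s ⟨hs.1, h⟩
  obtain ⟨u, hu, hu2⟩ := (mem_nhdsGT_iff_exists_Ioo_subset).1 hev
  have hxu : x < u := hu
  obtain ⟨s, hs, hsu⟩ := exists_lt_of_csInf_lt hAne hxu
  have hxs : x ≤ s := csInf_le hAb hs
  rcases hxs.eq_or_lt with h | h
  · rw [← h] at hs; exact hs.2 hQx
  · exact hs.2 (hu2 ⟨h, hsu⟩)

noncomputable def rr (k : ℝ → ℝ → ℝ) (θ t : ℝ) : ℝ := (k θ t)⁻¹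
noncomputable def rho (k : ℝ → ℝ → ℝ) (t : ℝ) : ℝ := (fCoeff (fun θ => rr k θ t) 0).re
noncomputable def ee (k : ℝ → ℝ → ℝ) (t θ : ℝ) : ℝ := (rho k t)⁻¹ * rr k θ t - 1
noncomputable def kk (k : ℝ → ℝ → ℝ) (t θ : ℝ) : ℝ := rho k t * k θ t
noncomputable def qq (p : ℕ) (k : ℝ → ℝ → ℝ) (t θ : ℝ) : ℝ := kk k t θ ^ p - 1 + p * ee k t θ

lemma fCoeff_neg (f : ℝ → ℝ) (n : ℤ) : fCoeff f (-n) = (starRingEnd ℂ) (fCoeff f n) := by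
  unfold fCoeff
  rw [map_mul, ← intervalIntegral.intervalIntegral_conj]
  congr 1
  · have e : (1 / (2 * (Real.pi:ℂ))) = ((1 / (2 * Real.pi) : ℝ) : ℂ) := by push_cast; rfl
    rw [e, Complex.conj_ofReal]
  · refine intervalIntegral.integral_congr fun θ _ => ?_
    simp [← Complex.exp_conj]

lemma fCoeff_zero_real (f : ℝ → ℝ) : fCoeff f 0 = ((fCoeff f 0).re : ℂ) := by
  have := fCoeff_neg f 0
  rw [neg_zero] at this
  exact (Complex.conj_eq_iff_re.1 this.symm).symm

lemma fCoeff_zero_eq {f : ℝ → ℝ} : (fCoeff f 0).re =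
    (1 / (2 * Real.pi)) * ∫ θ in (0:ℝ)..(2 * Real.pi), f θ := by
  have : fCoeff f 0 = (((1 / (2 * Real.pi)) * ∫ θ in (0:ℝ)..(2 * Real.pi), f θ : ℝ) : ℂ) := by
    unfold fCoeff
    push_cast
    rw [← intervalIntegral.integral_ofReal]
    simp
  rw [this, Complex.ofReal_re]

lemma fCoeff_zero_pos {f : ℝ → ℝ} (hf : Continuous f) (h : ∀ θ, 0 < f θ) : 0 < (fCoeff f 0).re := by
  rw [fCoeff_zero_eq]
  have hpi := Real.pi_pos
  have : 0 < ∫ θ in (0:ℝ)..(2 * Real.pi), f θ :=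
    intervalIntegral.intervalIntegral_pos_of_pos (hf.intervalIntegrable _ _) h (by positivity)
  positivity

section
variable {p : ℕ} {T : ℝ} {k : ℝ → ℝ → ℝ} {ψ : ℝ → ℝ}

lemma k_smt (h : IsPCSF p T k ψ) : SmT T k := ⟨h.1, fun θ t _ => h.2.1 θ t⟩

lemma r_smt (h : IsPCSF p T k ψ) : SmT T (rr k) :=
  ⟨h.1.inv fun q hq => (h.2.2.1 q.1 q.2 hq.2).ne', fun θ t _ => by simp only [rr, h.2.1 θ t]⟩

lemma v_smt (h : IsPCSF p T k ψ) : SmT T (fun θ t => k θ t ^ p) :=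
  ⟨h.1.pow p, fun θ t _ => by simp only [h.2.1 θ t]⟩

lemma r_pos (h : IsPCSF p T k ψ) {t : ℝ} (ht : t ∈ Ico 0 T) (θ : ℝ) : 0 < rr k θ t :=
  inv_pos.2 (h.2.2.1 θ t ht)

lemma rho_pos (h : IsPCSF p T k ψ) {t : ℝ} (ht : t ∈ Ico 0 T) : 0 < rho k t :=
  fCoeff_zero_pos ((r_smt h).sm ht).cont (r_pos h ht)

lemma ee_sm (h : IsPCSF p T k ψ) {t : ℝ} (ht : t ∈ Ico 0 T) : Sm (ee k t) :=
  ((Sm.const (rho k t)⁻¹).mul ((r_smt h).sm ht)).sub (Sm.const 1)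

lemma kk_sm (h : IsPCSF p T k ψ) {t : ℝ} (ht : t ∈ Ico 0 T) : Sm (kk k t) :=
  (Sm.const (rho k t)).mul ((k_smt h).sm ht)

lemma qq_sm (h : IsPCSF p T k ψ) {t : ℝ} (ht : t ∈ Ico 0 T) : Sm (qq p k t) :=
  (((kk_sm h ht).pow p).sub (Sm.const 1)).add ((Sm.const (p:ℝ)).mul (ee_sm h ht))

lemma kk_ee (h : IsPCSF p T k ψ) {t : ℝ} (ht : t ∈ Ico 0 T) (θ : ℝ) :
    kk k t θ * (1 + ee k t θ) = 1 := by
  have h1 := (rho_pos h ht).ne'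
  have h2 := (h.2.2.1 θ t ht).ne'
  unfold kk ee rr
  field_simp
  ring

lemma ee_coeff (h : IsPCSF p T k ψ) {t : ℝ} (ht : t ∈ Ico 0 T) {n : ℤ} (hn : n ≠ 0) :
    fCoeff (ee k t) n = (rho k t : ℂ)⁻¹ * fCoeff (fun θ => rr k θ t) n := by
  have hr := (r_smt h).sm ht
  have := fCoeff_sub (f := fun θ => (rho k t)⁻¹ * rr k θ t) (g := fun _ => 1)
    ((Sm.const (rho k t)⁻¹).mul hr).cont continuous_const n
  rw [fCoeff_smul, fCoeff_one, if_neg hn, sub_zero] at this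
  have e : fCoeff (ee k t) n = fCoeff (fun θ => (rho k t)⁻¹ * rr k θ t - 1) n := rfl
  rw [e, this]; push_cast; rfl

lemma ee_coeff_zero (h : IsPCSF p T k ψ) {t : ℝ} (ht : t ∈ Ico 0 T) :
    fCoeff (ee k t) 0 = 0 := by
  have hr := (r_smt h).sm ht
  have := fCoeff_sub (f := fun θ => (rho k t)⁻¹ * rr k θ t) (g := fun _ => 1)
    ((Sm.const (rho k t)⁻¹).mul hr).cont continuous_const 0
  rw [fCoeff_smul, fCoeff_one, if_pos rfl, fCoeff_zero_real (fun θ => rr k θ t)] at this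
  have h1 : (rho k t : ℂ) ≠ 0 := by exact_mod_cast (rho_pos h ht).ne'
  change fCoeff (ee k t) 0 = (((rho k t)⁻¹ : ℝ) : ℂ) * (rho k t : ℂ) - 1 at this
  rw [this]; push_cast; field_simp; ring

lemma r_coeff_neg_one (h : IsPCSF p T k ψ) {t : ℝ} (ht : t ∈ Ico 0 T) :
    fCoeff (fun θ => rr k θ t) (-1) = 0 := by
  have := h.2.2.2.2.2.2.2.2.2 t ht
  unfold fCoeff
  rw [mul_eq_zero]; right
  rw [← this]
  refine intervalIntegral.integral_congr fun θ _ => ?_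
  simp only [rr]
  push_cast
  rw [div_eq_mul_inv, mul_comm]
  congr 2; ring

lemma r_coeff_one (h : IsPCSF p T k ψ) {t : ℝ} (ht : t ∈ Ico 0 T) {n : ℤ} (hn : |n| = 1) :
    fCoeff (fun θ => rr k θ t) n = 0 := by
  rcases (abs_eq (by norm_num)).1 hn with rfl | rfl
  · have := fCoeff_neg (fun θ => rr k θ t) 1
    rw [r_coeff_neg_one h ht] at this
    exact (map_eq_zero _).1 this.symm
  · exact r_coeff_neg_one h ht

lemma ee_coeff_small (h : IsPCSF p T k ψ) {t : ℝ} (ht : t ∈ Ico 0 T) {n : ℤ} (hn : ¬ 2 ≤ |n|) :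
    fCoeff (ee k t) n = 0 := by
  by_cases h0 : n = 0
  · rw [h0]; exact ee_coeff_zero h ht
  · have : |n| = 1 := by
      have := Int.one_le_abs h0
      omega
    rw [ee_coeff h ht h0, r_coeff_one h ht this, mul_zero]

lemma v_second {f : ℝ → ℝ} (hf : Sm f) (p : ℕ) (hp : 1 ≤ p) (θ : ℝ) :
    deriv (deriv (fun x => f x ^ p)) θ =
      p * (f θ ^ (p - 1) * deriv (deriv f) θ + ((p:ℝ) - 1) * f θ ^ (p - 2) * (deriv f θ) ^ 2) := by
  obtain ⟨m, rfl⟩ : ∃ m, p = m + 1 := ⟨p - 1, by omega⟩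
  have h1 : deriv (fun x => f x ^ (m+1)) = fun x => ((m+1 : ℕ) : ℝ) * f x ^ m * deriv f x := by
    ext x
    have := (hf.hasDeriv x).fun_pow (m+1)
    rw [this.deriv]; simp
  rw [h1]
  have h2 := (((hf.hasDeriv θ).fun_pow m).const_mul ((m+1 : ℕ) : ℝ)).mul (hf.deriv.hasDeriv θ)
  have h3 := h2.deriv
  refine h3.trans ?_
  have e : m + 1 - 2 = m - 1 := by omega
  rw [e]
  simp only [Nat.add_sub_cancel]
  push_cast
  ring

lemma r_deriv (hp : 1 ≤ p) (h : IsPCSF p T k ψ) {t : ℝ} (ht : t ∈ Ico 0 T) (θ : ℝ) :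
    HasDerivAt (fun s => rr k θ s)
      (-(1 / (p:ℝ)) * (deriv (deriv (fun x => k x t ^ p)) θ + k θ t ^ p)) t := by
  have hk := (h.2.2.1 θ t ht).ne'
  have h1 := (h.2.2.2.1 θ t ht).inv hk
  have hp0 : (p:ℝ) ≠ 0 := by exact_mod_cast (by omega : p ≠ 0)
  refine h1.congr_deriv ?_
  rw [v_second ((k_smt h).sm ht) p hp]
  field_simp

lemma coeff_deriv' (hp : 1 ≤ p) (h : IsPCSF p T k ψ) {t : ℝ} (ht : t ∈ Ioo 0 T) (n : ℤ) :
    HasDerivAt (fun s => fCoeff (fun θ => rr k θ s) n)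
      ((((n:ℝ) ^ 2 - 1) / p : ℝ) * fCoeff (fun θ => k θ t ^ p) n) t := by
  have hv := v_smt h
  have hvs := hv.sm ⟨ht.1.le, ht.2⟩
  have hsm : SmT T (fun θ t => -(1 / (p:ℝ)) * (deriv (deriv (fun x => k x t ^ p)) θ + k θ t ^ p)) := by
    refine ⟨?_, fun θ s hs => ?_⟩
    · exact contDiffOn_const.mul (hv.deriv.deriv.1.add hv.1)
    · have h3 : deriv (deriv (fun x => k x s ^ p)) (θ + 2 * Real.pi)
          = deriv (deriv (fun x => k x s ^ p)) θ := (hv.sm hs).deriv.deriv.2 θ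
      have h2 := hv.2 θ s hs
      simp only at h2
      simp only [h3, h2]
  have := (r_smt h).coeff_deriv hsm (fun θ s hs => r_deriv hp h ⟨hs.1.le, hs.2⟩ θ) n ht
  refine this.congr_deriv ?_
  rw [fCoeff_smul, fCoeff_add hvs.deriv.deriv.cont hvs.cont, fCoeff_deriv hvs.deriv, fCoeff_deriv hvs]
  push_cast
  linear_combination (-(1 / (p:ℂ)) * n ^ 2 * fCoeff (fun θ => k θ t ^ p) n) * Complex.I_sq

lemma v_coeff (h : IsPCSF p T k ψ) {t : ℝ} (ht : t ∈ Ico 0 T) (n : ℤ) :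
    fCoeff (fun θ => k θ t ^ p) n = ((rho k t ^ p)⁻¹ : ℝ) *
      ((if n = 0 then 1 else 0) - p * fCoeff (ee k t) n + fCoeff (qq p k t) n) := by
  have he := ee_sm h ht
  have hq := qq_sm h ht
  have e : (fun θ => k θ t ^ p) = fun θ => (rho k t ^ p)⁻¹ * ((1 - (p:ℝ) * ee k t θ) + qq p k t θ) := by
    ext θ
    have := (rho_pos h ht).ne'
    simp only [qq, kk]
    field_simp
    ring
  rw [e, fCoeff_smul, fCoeff_add ((Sm.const 1).sub ((Sm.const (p:ℝ)).mul he)).cont hq.cont,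
    fCoeff_sub continuous_const ((Sm.const (p:ℝ)).mul he).cont, fCoeff_smul, fCoeff_one]
  simp

noncomputable def q0 (p : ℕ) (k : ℝ → ℝ → ℝ) (t : ℝ) : ℝ := (fCoeff (qq p k t) 0).re

lemma rho_deriv (hp : 1 ≤ p) (h : IsPCSF p T k ψ) {t : ℝ} (ht : t ∈ Ioo 0 T) :
    HasDerivAt (rho k) (-(1 / (p:ℝ)) * (rho k t ^ p)⁻¹ * (1 + q0 p k t)) t := by
  have ht' : t ∈ Ico 0 T := ⟨ht.1.le, ht.2⟩
  have h1 := Complex.reCLM.hasFDerivAt.comp_hasDerivAt t (coeff_deriv' hp h ht 0)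
  refine h1.congr_deriv ?_
  rw [v_coeff h ht', ee_coeff_zero h ht', fCoeff_zero_real (qq p k t)]
  change (_ : ℂ).re = _
  rw [if_pos rfl, ← mul_assoc, ← Complex.ofReal_mul, Complex.re_ofReal_mul]
  simp [q0]
  ring

lemma rho_cont (h : IsPCSF p T k ψ) : ContinuousOn (rho k) (Ico 0 T) :=
  Complex.continuous_re.comp_continuousOn ((r_smt h).coeff_cont 0)

lemma a_deriv (hp : 1 ≤ p) (h : IsPCSF p T k ψ) {t : ℝ} (ht : t ∈ Ioo 0 T) {n : ℤ} (hn : n ≠ 0) :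
    HasDerivAt (fun s => fCoeff (fun θ => rr k θ s) n)
      (-((((n:ℝ) ^ 2 - 1) * (rho k t ^ (p+1))⁻¹ : ℝ) : ℂ) * fCoeff (fun θ => rr k θ t) n
        + ((((n:ℝ) ^ 2 - 1) / p * (rho k t ^ p)⁻¹ : ℝ) : ℂ) * fCoeff (qq p k t) n) t := by
  have ht' : t ∈ Ico 0 T := ⟨ht.1.le, ht.2⟩
  refine (coeff_deriv' hp h ht n).congr_deriv ?_
  rw [v_coeff h ht', ee_coeff h ht' hn, if_neg hn]
  have h1 : (rho k t : ℂ) ≠ 0 := by exact_mod_cast (rho_pos h ht').ne'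
  have hp0 : (p:ℂ) ≠ 0 := by exact_mod_cast (by omega : p ≠ 0)
  push_cast
  field_simp
  ring

lemma pass (hp : 1 ≤ p) (h : IsPCSF p T k ψ) {t0 t1 : ℝ} (h0 : 0 ≤ t0) (h01 : t0 ≤ t1) (h1 : t1 < T)
    (m : ℕ) {w lam c : ℝ → ℝ} (hw : ∀ t ∈ Icc t0 t1, 0 < w t) (hwc : ContinuousOn w (Icc t0 t1))
    (hwd : ∀ t ∈ Ioo t0 t1, HasDerivAt w (-(lam t) * (rho k t ^ (p+1))⁻¹ * w t) t)
    (hc : ∀ t ∈ Ioo t0 t1, 0 ≤ c t ∧ nrm m (qq p k t) ≤ c t * nrm m (ee k t))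
    (hl : ∀ t ∈ Ioo t0 t1, ∀ n : ℤ, 2 ≤ |n| → 0 ≤ (n:ℝ)^2 - 1 - lam t ∧
      ((n:ℝ)^2 - 1) / p * c t ≤ ((n:ℝ)^2 - 1 - lam t) / 2) :
    ∀ t ∈ Ico t0 t1, nrm m (ee k t) * rho k t / w t ≤ nrm m (ee k t0) * rho k t0 / w t0 := by
  have sub : ∀ t ∈ Icc t0 t1, t ∈ Ico 0 T := fun t ht => ⟨h0.trans ht.1, ht.2.trans_lt h1⟩
  have sub' : ∀ t ∈ Ioo t0 t1, t ∈ Ioo 0 T := fun t ht => ⟨h0.trans_lt ht.1, ht.2.trans h1⟩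
  have hn0 : ∀ n : ℤ, 2 ≤ |n| → n ≠ 0 := fun n hn h => by subst h; simp at hn
  let ι := {n : ℤ // 2 ≤ |n|}
  have nrm_g : ∀ t ∈ Icc t0 t1, ∀ n : ι,
      ‖((jb n ^ m / w t : ℝ) : ℂ) * fCoeff (fun θ => rr k θ t) n‖
        = (jb n ^ m * ‖fCoeff (ee k t) n‖) * rho k t / w t := by
    intro t ht n
    have hr := rho_pos h (sub t ht)
    have hwt := hw t ht
    have hj := jb_pos (n:ℤ)
    rw [ee_coeff h (sub t ht) (hn0 n n.2), norm_mul, norm_mul, Complex.norm_real, norm_inv,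
      Complex.norm_real, Real.norm_of_nonneg hr.le, Real.norm_of_nonneg (by positivity)]
    field_simp
  have g_le : ∀ t ∈ Icc t0 t1, ∀ n : ι,
      ‖((jb n ^ m / w t : ℝ) : ℂ) * fCoeff (fun θ => rr k θ t) n‖ ≤ nrm m (ee k t) * rho k t / w t := by
    intro t ht n
    have hr := rho_pos h (sub t ht)
    have hwt := hw t ht
    rw [nrm_g t ht n]
    have := le_nrm (ee_sm h (sub t ht)) m n
    gcongr
  have le_g : ∀ t ∈ Icc t0 t1, ∀ G, (∀ n : ι,
      ‖((jb n ^ m / w t : ℝ) : ℂ) * fCoeff (fun θ => rr k θ t) n‖ ≤ G) →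
      nrm m (ee k t) * rho k t / w t ≤ G := by
    intro t ht G hG
    have hr := rho_pos h (sub t ht)
    have hwt := hw t ht
    have hG0 : 0 ≤ G := (norm_nonneg _).trans (hG ⟨2, by norm_num⟩)
    rw [div_le_iff₀ hwt, ← le_div_iff₀ hr]
    refine nrm_le fun n => ?_
    by_cases hn : 2 ≤ |n|
    · have := hG ⟨n, hn⟩
      rw [nrm_g t ht ⟨n, hn⟩, div_le_iff₀ hwt] at this
      rw [le_div_iff₀ hr]; exact this
    · rw [ee_coeff_small h (sub t ht) hn, norm_zero, mul_zero]; positivity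
  have hK : ∃ K, ∀ n : ι, ∀ t ∈ Icc t0 t1,
      ‖((jb n ^ m / w t : ℝ) : ℂ) * fCoeff (fun θ => rr k θ t) n‖ ≤ K := by
    obtain ⟨C, hC⟩ := (r_smt h).unif h1 m
    obtain ⟨W, hW⟩ := isCompact_Icc.exists_bound_of_continuousOn (hwc.inv₀ fun t ht => (hw t ht).ne')
    refine ⟨C * W, fun n t ht => ?_⟩
    have hwt := hw t ht
    have hj := jb_pos (n:ℤ)
    rw [norm_mul, Complex.norm_real, Real.norm_of_nonneg (by positivity)]
    have a1 := (le_nrm ((r_smt h).sm (sub t ht)) m n).trans (hC t ⟨h0.trans ht.1, ht.2⟩)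
    have a2 := hW t ht
    have a3 : 0 ≤ (w t)⁻¹ := by positivity
    rw [Pi.inv_apply, Real.norm_of_nonneg a3] at a2
    have a4 : 0 ≤ C := le_trans (by positivity) a1
    calc _ = (jb n ^ m * ‖fCoeff (fun θ => rr k θ t) n‖) * (w t)⁻¹ := by ring
      _ ≤ _ := by gcongr
  obtain ⟨K, hK⟩ := hK
  have main := famcmp (ι := ι)
    (g := fun n t => ((jb n ^ m / w t : ℝ) : ℂ) * fCoeff (fun θ => rr k θ t) n)
    (F := fun n t => ((jb n ^ m / w t * ((((n:ℤ):ℝ) ^ 2 - 1) / p * (rho k t ^ p)⁻¹) : ℝ) : ℂ)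
      * fCoeff (qq p k t) n)
    (a := fun n t => ((((n:ℤ):ℝ) ^ 2 - 1 - lam t) * (rho k t ^ (p+1))⁻¹))
    (t0 := t0) (t1 := t1) (B0 := nrm m (ee k t0) * rho k t0 / w t0) (K := K)
    ?_ ?_ ?_ ?_ hK ?_ ?_
  · intro t ht
    exact le_g t ⟨ht.1, ht.2.le⟩ _ (fun n => main n t ht)
  · intro n
    refine ContinuousOn.mul ?_ (((r_smt h).coeff_cont n).mono sub)
    exact Complex.continuous_ofReal.comp_continuousOn
      (continuousOn_const.div hwc fun t ht => (hw t ht).ne')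
  · intro n t ht
    have ht2 : t ∈ Icc t0 t1 := ⟨ht.1.le, ht.2.le⟩
    have hwt := hw t ht2
    have hr := rho_pos h (sub t ht2)
    have d1 := ((hasDerivAt_const t (jb n ^ m)).div (hwd t ht) hwt.ne').ofReal_comp
    have d2 := d1.mul (a_deriv hp h (sub' t ht) (hn0 n n.2))
    refine d2.congr_deriv ?_
    have w0 : (w t : ℂ) ≠ 0 := by exact_mod_cast hwt.ne'
    have r0 : (rho k t : ℂ) ≠ 0 := by exact_mod_cast hr.ne'
    have hp0 : (p:ℂ) ≠ 0 := by exact_mod_cast (by omega : p ≠ 0)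
    simp only [Pi.div_apply]
    push_cast
    field_simp
    ring
  · intro n t ht
    have hr := rho_pos h (sub t ⟨ht.1.le, ht.2.le⟩)
    exact mul_nonneg (hl t ht n n.2).1 (by positivity)
  · intro t ht G hG n
    have ht2 : t ∈ Icc t0 t1 := ⟨ht.1.le, ht.2.le⟩
    have hwt := hw t ht2
    have hr := rho_pos h (sub t ht2)
    have hj := jb_pos (n:ℤ)
    have hG1 := le_g t ht2 G hG
    have hG0 : 0 ≤ G := (norm_nonneg _).trans (hG n)
    obtain ⟨c0, c1⟩ := hc t ht
    obtain ⟨l0, l1⟩ := hl t ht n n.2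
    have n2 : 0 ≤ ((n:ℤ):ℝ)^2 - 1 := by
      have : (2:ℝ) ≤ |((n:ℤ):ℝ)| := by exact_mod_cast n.2
      nlinarith [sq_abs ((n:ℤ):ℝ)]
    have hqn := le_nrm (qq_sm h (sub t ht2)) m n
    rw [div_le_iff₀ hwt, ← le_div_iff₀ hr] at hG1
    rw [norm_mul, Complex.norm_real, Real.norm_of_nonneg (by positivity)]
    calc _ = ((((n:ℤ):ℝ) ^ 2 - 1) / p * (rho k t ^ p)⁻¹ / w t)
            * (jb n ^ m * ‖fCoeff (qq p k t) n‖) := by ring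
      _ ≤ ((((n:ℤ):ℝ) ^ 2 - 1) / p * (rho k t ^ p)⁻¹ / w t) * (c t * (G * w t / rho k t)) := by
          exact mul_le_mul_of_nonneg_left (hqn.trans (c1.trans (by gcongr))) (by positivity)
      _ = ((((n:ℤ):ℝ) ^ 2 - 1) / p * c t) * ((rho k t ^ (p+1))⁻¹ * G) := by
          field_simp; ring
      _ ≤ ((((n:ℤ):ℝ)^2 - 1 - lam t) / 2) * ((rho k t ^ (p+1))⁻¹ * G) := by gcongr
      _ = _ := by ring
  · intro n; exact g_le t0 ⟨le_rfl, h01⟩ n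
  · have hr := rho_pos h (sub t0 ⟨le_rfl, h01⟩)
    have := hw t0 ⟨le_rfl, h01⟩
    have := nrm_nonneg (ee k t0) m
    positivity
end

section
variable {p : ℕ} {T : ℝ} {k : ℝ → ℝ → ℝ} {ψ : ℝ → ℝ}

lemma ee_coeff_cont (h : IsPCSF p T k ψ) (n : ℤ) :
    ContinuousOn (fun t => fCoeff (ee k t) n) (Ico 0 T) := by
  by_cases hn : n = 0
  · subst hn
    exact (continuousOn_const (c := (0:ℂ))).congr fun t ht => ee_coeff_zero h ht
  · have h1 : ContinuousOn (fun t => (rho k t : ℂ)⁻¹ * fCoeff (fun θ => rr k θ t) n) (Ico 0 T) := by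
      refine ContinuousOn.mul (ContinuousOn.inv₀ ?_ ?_) ((r_smt h).coeff_cont n)
      · exact Complex.continuous_ofReal.comp_continuousOn (rho_cont h)
      · intro t ht
        exact_mod_cast (rho_pos h ht).ne'
    exact h1.congr fun t ht => ee_coeff h ht hn

lemma closed_nrm (h : IsPCSF p T k ψ) {x : ℝ} (hx : x ∈ Ioo 0 T) (m : ℕ) {C : ℝ}
    (hC : ∀ s ∈ Ico 0 x, nrm m (ee k s) ≤ C) : nrm m (ee k x) ≤ C := by
  refine nrm_le fun n => ?_
  have hx' : x ∈ Ico 0 T := ⟨hx.1.le, hx.2⟩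
  have c1 : ContinuousWithinAt (fun t => jb n ^ m * ‖fCoeff (ee k t) n‖) (Ico 0 x) x :=
    ((continuousOn_const.mul (ee_coeff_cont h n).norm) x hx').mono
      fun s hs => ⟨hs.1, hs.2.trans hx.2⟩
  have : (nhdsWithin x (Ico 0 x)).NeBot := by
    rw [← mem_closure_iff_nhdsWithin_neBot, closure_Ico hx.1.ne]
    exact ⟨hx.1.le, le_rfl⟩
  refine le_of_tendsto c1.tendsto ?_
  filter_upwards [self_mem_nhdsWithin] with s hs
  exact (le_nrm (ee_sm h ⟨hs.1, hs.2.trans hx.2⟩) m n).trans (hC s hs)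

lemma r_lip (hp : 1 ≤ p) (h : IsPCSF p T k ψ) {t1 : ℝ} (ht1 : t1 < T) : ∃ L, 0 ≤ L ∧ ∀ x y, 0 ≤ x →
    x ≤ y → y ≤ t1 → ∀ n : ℤ, n ≠ 0 →
    jb n ^ 2 * ‖fCoeff (fun θ => rr k θ y) n - fCoeff (fun θ => rr k θ x) n‖ ≤ L * (y - x) := by
  obtain ⟨L, hL⟩ := (v_smt h).unif ht1 4
  refine ⟨max L 0, le_max_right _ _, ?_⟩
  have p1 : (1:ℝ) ≤ p := by exact_mod_cast hp
  have key : ∀ x y, 0 < x → x ≤ y → y ≤ t1 → ∀ n : ℤ, n ≠ 0 →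
      jb n ^ 2 * ‖fCoeff (fun θ => rr k θ y) n - fCoeff (fun θ => rr k θ x) n‖ ≤ max L 0 * (y - x) := by
    intro x y hx hxy hy n hn
    have hj := jb_pos n
    have := (convex_Icc x y).norm_image_sub_le_of_norm_hasDerivWithin_le
      (f := fun s => fCoeff (fun θ => rr k θ s) n)
      (f' := fun s => ((((n:ℝ) ^ 2 - 1) / p : ℝ) * fCoeff (fun θ => k θ s ^ p) n))
      (C := max L 0 * (jb n ^ 2)⁻¹)
      (fun s hs => (coeff_deriv' hp h ⟨hx.trans_le hs.1, (hs.2.trans hy).trans_lt ht1⟩ n).hasDerivWithinAt)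
      ?_ (left_mem_Icc.2 hxy) (right_mem_Icc.2 hxy)
    · rw [Real.norm_of_nonneg (by linarith)] at this
      calc _ ≤ jb n ^ 2 * (max L 0 * (jb n ^ 2)⁻¹ * (y - x)) := by gcongr
        _ = _ := by field_simp
    · intro s hs
      have hs1 : s ∈ Icc 0 t1 := ⟨hx.le.trans hs.1, hs.2.trans hy⟩
      have a1 := (le_nrm ((v_smt h).sm ⟨hs1.1, hs1.2.trans_lt ht1⟩) 4 n).trans (hL s hs1)
      have hn1 : 1 ≤ jb n ^ 2 := one_le_pow₀ (jb_one_le n)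
      have e : (n:ℝ)^2 = jb n ^ 2 := by rw [jb_ne hn, sq_abs]
      rw [norm_mul, Complex.norm_real, e, Real.norm_of_nonneg (div_nonneg (by linarith) (by linarith)),
        ← div_eq_mul_inv, le_div_iff₀ (by positivity)]
      have a2 : (jb n ^ 2 - 1) / p ≤ jb n ^ 2 := by
        rw [div_le_iff₀ (by linarith)]; nlinarith
      calc _ ≤ jb n ^ 2 * ‖fCoeff (fun θ => k θ s ^ p) n‖ * jb n ^ 2 := by gcongr
        _ = jb n ^ 4 * ‖fCoeff (fun θ => k θ s ^ p) n‖ := by ring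
        _ ≤ _ := a1.trans (le_max_left _ _)
  intro x y hx hxy hy n hn
  rcases hx.eq_or_lt with rfl | hx
  · rcases hxy.eq_or_lt with rfl | hxy
    · simp
    have hT : (0:ℝ) ∈ Ico 0 T := ⟨le_rfl, (hxy.trans_le hy).trans ht1⟩
    have c1 : ContinuousWithinAt (fun s => jb n ^ 2 * ‖fCoeff (fun θ => rr k θ y) n - fCoeff (fun θ => rr k θ s) n‖)
        (Ioc 0 y) 0 :=
      ((continuousOn_const.mul (continuousOn_const.sub ((r_smt h).coeff_cont n)).norm) 0 hT).mono
        fun s hs => ⟨hs.1.le, (hs.2.trans hy).trans_lt ht1⟩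
    have c2 : ContinuousWithinAt (fun s => max L 0 * (y - s)) (Ioc 0 y) 0 := by fun_prop
    have : (nhdsWithin 0 (Ioc 0 y)).NeBot := by
      rw [← mem_closure_iff_nhdsWithin_neBot, closure_Ioc hxy.ne]
      exact ⟨le_rfl, hxy.le⟩
    refine le_of_tendsto_of_tendsto c1.tendsto c2.tendsto ?_
    filter_upwards [self_mem_nhdsWithin] with s hs
    exact key s y hs.1 hs.2 hy n hn
  · exact key x y hx hxy hy n hn

lemma open_nrm (hp : 1 ≤ p) (h : IsPCSF p T k ψ) {x η : ℝ} (hx : x ∈ Ico 0 T)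
    (hη : nrm 2 (ee k x) < η) : ∀ᶠ y in nhdsWithin x (Ioi x), nrm 2 (ee k y) ≤ η := by
  obtain ⟨L, hL0, hL⟩ := r_lip hp h (t1 := (x + T) / 2) (by linarith [hx.2])
  have rc : ContinuousWithinAt (rho k) (Ioi x) x := by
    have := rho_cont h x hx
    refine this.mono_of_mem_nhdsWithin ?_
    filter_upwards [Ioo_mem_nhdsGT hx.2] with s hs
    exact ⟨hx.1.trans hs.1.le, hs.2⟩
  have rp := rho_pos h hx
  have c1 : ContinuousWithinAt (fun y => (nrm 2 (ee k x) * rho k x + L * (y - x)) * (rho k y)⁻¹) (Ioi x) x :=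
    ContinuousWithinAt.mul (by fun_prop) (rc.inv₀ rp.ne')
  have ev := c1.tendsto.eventually_lt_const (u := η) (by
    rw [sub_self, mul_zero, add_zero, mul_assoc, mul_inv_cancel₀ rp.ne', mul_one]; exact hη)
  filter_upwards [ev, Ioo_mem_nhdsGT (show x < (x + T)/2 by linarith [hx.2])] with y hy hyI
  have hyT : y ∈ Ico 0 T := ⟨hx.1.trans hyI.1.le, by linarith [hyI.2, hx.2]⟩
  have rpy := rho_pos h hyT
  refine le_trans (nrm_le fun n => ?_) hy.le
  have hj := jb_pos n
  have hn0 := nrm_nonneg (ee k x) 2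
  have hyx : 0 ≤ y - x := by linarith [hyI.1]
  by_cases hn : n = 0
  · subst hn
    rw [ee_coeff_zero h hyT, norm_zero, mul_zero]; positivity
  · rw [ee_coeff h hyT hn, norm_mul, norm_inv, Complex.norm_real, Real.norm_of_nonneg rpy.le]
    have b1 := hL x y hx.1 hyI.1.le hyI.2.le n hn
    have b2 := le_nrm (ee_sm h hx) 2 n
    rw [ee_coeff h hx hn, norm_mul, norm_inv, Complex.norm_real, Real.norm_of_nonneg rp.le] at b2
    have b3 : jb n ^ 2 * ‖fCoeff (fun θ => rr k θ x) n‖ ≤ nrm 2 (ee k x) * rho k x := by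
      rw [← div_le_iff₀ rp]; refine le_trans (le_of_eq ?_) b2; field_simp
    have b4 := norm_le_norm_add_norm_sub' (fCoeff (fun θ => rr k θ y) n) (fCoeff (fun θ => rr k θ x) n)
    calc _ = (jb n ^ 2 * ‖fCoeff (fun θ => rr k θ y) n‖) * (rho k y)⁻¹ := by ring
      _ ≤ _ := by
        gcongr
        calc _ ≤ jb n ^ 2 * (‖fCoeff (fun θ => rr k θ x) n‖ + ‖fCoeff (fun θ => rr k θ y) n - fCoeff (fun θ => rr k θ x) n‖) := by gcongr
          _ ≤ _ := by rw [mul_add]; linarith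

lemma q0_le (h : IsPCSF p T k ψ) {t : ℝ} (ht : t ∈ Ico 0 T) : |q0 p k t| ≤ nrm 2 (qq p k t) := by
  have := le_nrm (qq_sm h ht) 2 0
  rw [jb_zero, one_pow, one_mul] at this
  exact (Complex.abs_re_le_norm _).trans this

lemma pow_deriv (hp : 1 ≤ p) (h : IsPCSF p T k ψ) {t : ℝ} (ht : t ∈ Ioo 0 T) (j : ℕ) :
    HasDerivAt (fun s => rho k s ^ j) (-(j / (p:ℝ) * (1 + q0 p k t)) * (rho k t ^ (p+1))⁻¹ * rho k t ^ j) t := by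
  have hr := rho_pos h ⟨ht.1.le, ht.2⟩
  have p0 : (p:ℝ) ≠ 0 := by exact_mod_cast (by omega : p ≠ 0)
  refine ((rho_deriv hp h ht).fun_pow j).congr_deriv ?_
  rcases j with _ | j
  · simp
  · simp only [Nat.add_sub_cancel]
    field_simp
    ring

/-- first pass -/
lemma pass_one (hp : 1 ≤ p) (h : IsPCSF p T k ψ) {η C : ℝ} (hη : 0 < η) (hC : 1 ≤ C)
    (hCη : 12 * (C * η) ≤ 1) 
    (hal : ∀ t ∈ Ico 0 T, nrm 2 (ee k t) ≤ η → nrm 2 (qq p k t) ≤ C * nrm 2 (ee k t) * nrm 2 (ee k t))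
    (h0 : nrm 2 (ee k 0) ≤ η / 2) (hT : 0 < T) :
    ∀ t ∈ Ico 0 T, nrm 2 (ee k t) ≤ η ∧
      nrm 2 (ee k t) ≤ nrm 2 (ee k 0) / rho k 0 * rho k t ∧ |q0 p k t| ≤ 1/4 ∧ |q0 p k t| ≤ nrm 2 (ee k t) := by
  have p1 : (1:ℝ) ≤ p := by exact_mod_cast hp
  have η1 : η ≤ 1 := by nlinarith
  have hT0 : (0:ℝ) ∈ Ico 0 T := ⟨le_rfl, hT⟩
  have r0 := rho_pos h hT0
  have hq : ∀ t ∈ Ico 0 T, nrm 2 (ee k t) ≤ η → |q0 p k t| ≤ 1/4 ∧ |q0 p k t| ≤ nrm 2 (ee k t) := by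
    intro t ht hQ
    have a1 := (q0_le h ht).trans (hal t ht hQ)
    have a2 := nrm_nonneg (ee k t) 2
    have a3 : C * nrm 2 (ee k t) ≤ 1/12 := by nlinarith
    have a4 : C * nrm 2 (ee k t) * nrm 2 (ee k t) ≤ 1/12 * nrm 2 (ee k t) := by gcongr
    constructor <;> linarith
  have step : ∀ x ∈ Ioo 0 T, (∀ s ∈ Ioo 0 x, nrm 2 (ee k s) ≤ η) → ∀ t ∈ Ico 0 x,
      nrm 2 (ee k t) ≤ nrm 2 (ee k 0) / rho k 0 * rho k t ∧ rho k t ≤ rho k 0 := by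
    intro x hx hQ t ht
    have htT : t ∈ Ico 0 T := ⟨ht.1, ht.2.trans hx.2⟩
    have sT : ∀ s ∈ Ioo 0 x, s ∈ Ico 0 T := fun s hs => ⟨hs.1.le, hs.2.trans hx.2⟩
    have sT' : ∀ s ∈ Ioo 0 x, s ∈ Ioo 0 T := fun s hs => ⟨hs.1, hs.2.trans hx.2⟩
    have sI : Icc 0 x ⊆ Ico 0 T := fun s hs => ⟨hs.1, hs.2.trans_lt hx.2⟩
    have rt := rho_pos h htT
    constructor
    · have := pass hp h le_rfl hx.1.le hx.2 2 (w := fun s => rho k s ^ 2)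
        (lam := fun s => (2:ℕ) / (p:ℝ) * (1 + q0 p k s)) (c := fun _ => C * η)
        (fun s hs => by have := rho_pos h (sI hs); positivity)
        (((rho_cont h).mono sI).pow 2)
        (fun s hs => pow_deriv hp h (sT' s hs) 2) ?_ ?_ t ht
      · have e1 : nrm 2 (ee k t) * rho k t / rho k t ^ 2 = nrm 2 (ee k t) / rho k t := by field_simp
        have e2 : nrm 2 (ee k 0) * rho k 0 / rho k 0 ^ 2 = nrm 2 (ee k 0) / rho k 0 := by field_simp
        rw [e1, e2, div_le_iff₀ rt] at this
        exact this
      · intro s hs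
        refine ⟨by positivity, (hal s (sT s hs) (hQ s hs)).trans ?_⟩
        have := nrm_nonneg (ee k s) 2
        have := hQ s hs
        gcongr
      · intro s hs n hn
        obtain ⟨a1, -⟩ := hq s (sT s hs) (hQ s hs)
        rw [abs_le] at a1
        have hN : (3:ℝ) ≤ (n:ℝ)^2 - 1 := by
          have : (2:ℝ) ≤ |(n:ℝ)| := by exact_mod_cast hn
          nlinarith [sq_abs (n:ℝ)]
        have l1 : (2:ℕ) / (p:ℝ) * (1 + q0 p k s) ≤ 5/2 := by
          have : (2:ℕ) / (p:ℝ) ≤ 2 := by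
            rw [div_le_iff₀ (by linarith)]; push_cast; linarith
          nlinarith
        have l2 : ((n:ℝ)^2 - 1) / p * (C * η) ≤ ((n:ℝ)^2 - 1) * (1/12) := by
          have : ((n:ℝ)^2 - 1) / p ≤ ((n:ℝ)^2 - 1) := div_le_self (by linarith) p1
          have h3 : 0 ≤ C * η := by positivity
          calc _ ≤ ((n:ℝ)^2 - 1) * (C * η) := by gcongr
            _ ≤ _ := mul_le_mul_of_nonneg_left (by linarith) (by linarith)
        exact ⟨by linarith, by linarith⟩
    · have anti : AntitoneOn (rho k) (Icc 0 x) := by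
        refine antitoneOn_of_deriv_nonpos (convex_Icc 0 x) ((rho_cont h).mono sI) ?_ ?_
        · rw [interior_Icc]
          intro s hs
          exact (rho_deriv hp h (sT' s hs)).differentiableAt.differentiableWithinAt
        · rw [interior_Icc]
          intro s hs
          rw [(rho_deriv hp h (sT' s hs)).deriv]
          obtain ⟨a1, -⟩ := hq s (sT s hs) (hQ s hs)
          rw [abs_le] at a1
          have rs := rho_pos h (sT s hs)
          have : 0 ≤ 1 / (p:ℝ) * (rho k s ^ p)⁻¹ * (1 + q0 p k s) :=
            mul_nonneg (by positivity) (by linarith)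
          linarith
      exact anti ⟨le_rfl, hx.1.le⟩ ⟨ht.1, ht.2.le⟩ ht.1
  have step2 : ∀ x ∈ Ioo 0 T, (∀ s ∈ Ioo 0 x, nrm 2 (ee k s) ≤ η) → ∀ t ∈ Ico 0 x,
      nrm 2 (ee k t) ≤ η / 2 := by
    intro x hx hQ t ht
    obtain ⟨a1, a2⟩ := step x hx hQ t ht
    have := nrm_nonneg (ee k 0) 2
    calc _ ≤ _ := a1
      _ ≤ nrm 2 (ee k 0) / rho k 0 * rho k 0 := by gcongr
      _ = nrm 2 (ee k 0) := by field_simp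
      _ ≤ _ := h0
  have all : ∀ t ∈ Ico 0 T, nrm 2 (ee k t) ≤ η := by
    refine boot (by linarith) ?_ ?_
    · intro x hx hQ
      exact closed_nrm h hx 2 hQ
    · intro x hx hQ
      refine open_nrm hp h hx (lt_of_le_of_lt ?_ (half_lt_self hη))
      rcases hx.1.eq_or_lt with rfl | hx0
      · exact h0
      · exact closed_nrm h ⟨hx0, hx.2⟩ 2
          (step2 x ⟨hx0, hx.2⟩ fun s hs => hQ s ⟨hs.1.le, hs.2.le⟩)
  intro t ht
  refine ⟨all t ht, ?_, hq t ht (all t ht)⟩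
  have hx : (t + T) / 2 ∈ Ioo 0 T := ⟨by linarith [ht.1], by linarith [ht.2]⟩
  exact (step _ hx (fun s hs => all s ⟨hs.1.le, hs.2.trans hx.2⟩) t ⟨ht.1, by linarith [ht.2]⟩).1

lemma rho_tendsto (h : IsPCSF p T k ψ) (hT : 0 < T)
    (hk : ∀ t ∈ Ico 0 T, nrm 2 (kk k t) ≤ 2) : Tendsto (rho k) (nhdsWithin T (Iio T)) (nhds 0) := by
  have ht := h.2.2.2.2.2.2.2.2.1
  have h1 := ht.const_div_atTop (SS * 2)
  refine tendsto_of_tendsto_of_tendsto_of_le_of_le' tendsto_const_nhds h1 ?_ ?_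
  · filter_upwards [Ioo_mem_nhdsLT hT] with t ht
    exact (rho_pos h ⟨ht.1.le, ht.2⟩).le
  · filter_upwards [Ioo_mem_nhdsLT hT, ht.eventually_gt_atTop 0] with t ht hpos
    have htT : t ∈ Ico 0 T := ⟨ht.1.le, ht.2⟩
    have r := rho_pos h htT
    rw [le_div_iff₀ hpos, mul_comm, ← le_div_iff₀ r]
    have : Nonempty (Icc (0:ℝ) (2 * Real.pi)) := ⟨⟨0, le_rfl, by positivity⟩⟩
    refine ciSup_le fun θ => ?_
    rw [le_div_iff₀ r, mul_comm]
    calc _ ≤ |kk k t θ| := le_abs_self _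
      _ ≤ _ := fsup_le (kk_sm h htT) _
      _ ≤ _ := mul_le_mul_of_nonneg_left (hk t htT) SS_nonneg

lemma rho_rate (hp : 1 ≤ p) (h : IsPCSF p T k ψ) (_hT : 0 < T)
    (hl : Tendsto (rho k) (nhdsWithin T (Iio T)) (nhds 0)) (hq : ∀ t ∈ Ico 0 T, |q0 p k t| ≤ 1/4) :
    ∀ t ∈ Ico 0 T, rho k t ^ (p+1) ≤ 3 * (T - t) := by
  have p1 : (1:ℝ) ≤ p := by exact_mod_cast hp
  have mono : MonotoneOn (fun s => rho k s ^ (p+1) + 3 * s) (Ico 0 T) := by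
    refine monotoneOn_of_deriv_nonneg (convex_Ico 0 T) (((rho_cont h).pow _).add (by fun_prop)) ?_ ?_
    · rw [interior_Ico]
      intro s hs
      exact ((pow_deriv hp h hs (p+1)).differentiableAt.add (by fun_prop)).differentiableWithinAt
    · rw [interior_Ico]
      intro s hs
      have hd := (pow_deriv hp h hs (p+1)).add ((hasDerivAt_id s).const_mul 3)
      have rs := rho_pos h ⟨hs.1.le, hs.2⟩
      have e : deriv (fun s => rho k s ^ (p+1) + 3 * s) s = _ := hd.deriv
      rw [e, mul_assoc, inv_mul_cancel₀ (by positivity)]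
      have a1 := hq s ⟨hs.1.le, hs.2⟩
      rw [abs_le] at a1
      have : ((p+1 : ℕ):ℝ) / p ≤ 2 := by
        rw [div_le_iff₀ (by linarith)]; push_cast; linarith
      nlinarith
  intro t ht
  have l1 : Tendsto (fun s => rho k s ^ (p+1) + 3 * s) (nhdsWithin T (Iio T)) (nhds (0 ^ (p+1) + 3 * T)) :=
    (hl.pow _).add ((continuous_const.mul continuous_id).continuousAt.tendsto.mono_left nhdsWithin_le_nhds)
  have := ge_of_tendsto l1 (b := rho k t ^ (p+1) + 3 * t) (by
    filter_upwards [Ioo_mem_nhdsLT ht.2] with s hs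
    exact mono ht ⟨ht.1.trans hs.1.le, hs.2⟩ hs.1.le)
  rw [zero_pow (by omega)] at this
  linarith

lemma pass_two (hp : 1 ≤ p) (h : IsPCSF p T k ψ) (hT : 0 < T)
    (hl : Tendsto (rho k) (nhdsWithin T (Iio T)) (nhds 0)) (hq : ∀ t ∈ Ico 0 T, |q0 p k t| ≤ 1/4)
    {K : ℝ} (hK : 0 < K) (he : ∀ t ∈ Ico 0 T, nrm 2 (ee k t) ≤ K * rho k t)
    (hq' : ∀ t ∈ Ico 0 T, |q0 p k t| ≤ K * rho k t) (m : ℕ) {δ C : ℝ} (hδ : 0 < δ) (hC : 1 ≤ C)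
    (hal : ∀ t ∈ Ico 0 T, nrm 2 (ee k t) ≤ δ → nrm m (qq p k t) ≤ C * nrm 2 (ee k t) * nrm m (ee k t)) :
    ∃ t0 ∈ Ico 0 T, ∃ B, 0 ≤ B ∧ ∀ t ∈ Ico t0 T, nrm 2 (ee k t) ≤ δ ∧
      nrm m (ee k t) * rho k t ≤ B * rho k t ^ (3 * p) := by
  have p1 : (1:ℝ) ≤ p := by exact_mod_cast hp
  have p0 : (p:ℝ) ≠ 0 := by linarith
  have hσ : 0 < min (δ / K) (1 / (2 * C * K)) := by positivity
  obtain ⟨u, hu, hsub⟩ := (mem_nhdsLT_iff_exists_mem_Ico_Ioo_subset hT).1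
    ((hl.eventually_lt_const hσ))
  have ht0 : (u + T) / 2 ∈ Ico 0 T := ⟨by linarith [hu.1], by linarith [hu.2]⟩
  have hut : u < (u + T) / 2 := by linarith [hu.2]
  generalize (u + T) / 2 = t0 at ht0 hut
  have sT : ∀ s ∈ Ico t0 T, s ∈ Ico 0 T := fun s hs => ⟨ht0.1.trans hs.1, hs.2⟩
  have sm1 : ∀ s ∈ Ico t0 T, K * rho k s ≤ δ := by
    intro s hs
    have : rho k s < _ := hsub ⟨hut.trans_le hs.1, hs.2⟩
    have := (lt_min_iff.1 this).1
    rw [lt_div_iff₀ hK] at this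
    linarith
  have sm2 : ∀ s ∈ Ico t0 T, 2 * C * K * rho k s ≤ 1 := by
    intro s hs
    have : rho k s < _ := hsub ⟨hut.trans_le hs.1, hs.2⟩
    have := (lt_min_iff.1 this).2
    rw [lt_div_iff₀ (by positivity)] at this
    linarith
  have hee : ∀ s ∈ Ico t0 T, nrm 2 (ee k s) ≤ δ := fun s hs => (he s (sT s hs)).trans (sm1 s hs)
  have r0 := rho_pos h ht0
  have n0 := nrm_nonneg (ee k t0) m
  set A : ℝ := p * (4 * K + 8 * C * K) with hA
  have A0 : 0 ≤ A := by positivity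
  refine ⟨t0, ht0, nrm m (ee k t0) * rho k t0 / (rho k t0 ^ (3 * p) * Real.exp (-A * rho k t0)),
    by positivity, fun t ht => ⟨hee t ht, ?_⟩⟩
  obtain ⟨t1, htt, ht1⟩ := exists_between ht.2
  have h01 : t0 ≤ t1 := ht.1.trans htt.le
  have sI : Icc t0 t1 ⊆ Ico 0 T := fun s hs => ⟨ht0.1.trans hs.1, hs.2.trans_lt ht1⟩
  have sI' : ∀ s ∈ Ioo t0 t1, s ∈ Ioo 0 T := fun s hs => ⟨ht0.1.trans_lt hs.1, hs.2.trans ht1⟩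
  have sJ : ∀ s ∈ Ioo t0 t1, s ∈ Ico t0 T := fun s hs => ⟨hs.1.le, hs.2.trans ht1⟩
  have rt := rho_pos h (sT t ht)
  have key := pass hp h ht0.1 h01 ht1 m (w := fun s => rho k s ^ (3 * p) * Real.exp (-A * rho k s))
    (lam := fun s => (3 - A * rho k s / p) * (1 + q0 p k s)) (c := fun s => C * K * rho k s)
    (fun s hs => by have := rho_pos h (sI hs); positivity)
    ((((rho_cont h).mono sI).pow _).mul
      (Real.continuous_exp.comp_continuousOn (continuousOn_const.mul ((rho_cont h).mono sI))))
    ?_ ?_ ?_ t ⟨ht.1, htt⟩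
  · rw [div_le_iff₀ (by positivity)] at key
    refine key.trans (mul_le_mul_of_nonneg_left ?_ (by positivity))
    have : Real.exp (-A * rho k t) ≤ 1 := Real.exp_le_one_iff.2 (by nlinarith)
    calc _ ≤ rho k t ^ (3 * p) * 1 := by gcongr
      _ = _ := mul_one _
  · intro s hs
    have rs := rho_pos h (sT s (sJ s hs))
    have d := (pow_deriv hp h (sI' s hs) (3 * p)).mul (((rho_deriv hp h (sI' s hs)).const_mul (-A)).exp)
    refine d.congr_deriv ?_
    push_cast
    field_simp
    ring
  · intro s hs
    have rs := rho_pos h (sT s (sJ s hs))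
    refine ⟨by positivity, (hal s (sT s (sJ s hs)) (hee s (sJ s hs))).trans ?_⟩
    have a1 := he s (sT s (sJ s hs))
    have a2 := nrm_nonneg (ee k s) m
    rw [mul_assoc C K]
    gcongr
  · intro s hs n hn
    have rs := rho_pos h (sT s (sJ s hs))
    have a1 := hq s (sT s (sJ s hs))
    have a2 := hq' s (sT s (sJ s hs))
    have a3 := sm2 s (sJ s hs)
    rw [abs_le] at a1 a2
    have hN : (3:ℝ) ≤ (n:ℝ)^2 - 1 := by
      have : (2:ℝ) ≤ |(n:ℝ)| := by exact_mod_cast hn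
      nlinarith [sq_abs (n:ℝ)]
    generalize (n:ℝ)^2 - 1 = N at hN
    have eA : A * rho k s / p = (4 * K + 8 * C * K) * rho k s := by
      rw [hA]; field_simp
    simp only [eA]
    have b0 : 0 ≤ K * rho k s := by positivity
    have b1 : 0 ≤ C * K * rho k s := by positivity
    have b2 : (4 * K + 8 * C * K) * rho k s * (3/4) ≤ (4 * K + 8 * C * K) * rho k s * (1 + q0 p k s) :=
      mul_le_mul_of_nonneg_left (by linarith) (by positivity)
    have b3 : 2 * (N - 3) * (C * K * rho k s) ≤ N - 3 := by nlinarith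
    have b4 : N / p * (C * K * rho k s) ≤ N * (C * K * rho k s) :=
      mul_le_mul_of_nonneg_right (div_le_self (by linarith) p1) b1
    have b5 : 2 * N * (C * K * rho k s) ≤ N - (3 - (4 * K + 8 * C * K) * rho k s) * (1 + q0 p k s) := by
      nlinarith
    have b6 : 0 ≤ 2 * N * (C * K * rho k s) := by positivity
    exact ⟨by linarith, by linarith⟩
end

section
variable {p : ℕ} {T : ℝ} {k : ℝ → ℝ → ℝ} {ψ : ℝ → ℝ}

lemma f_sm (h : IsPCSF p T k ψ) {t : ℝ} (ht : t ∈ Ico 0 T) :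
    Sm (fun θ => k θ t - (fCoeff (fun x => k x t) 0).re) := ((k_smt h).sm ht).sub (Sm.const _)

lemma f_coeff (h : IsPCSF p T k ψ) {t : ℝ} (ht : t ∈ Ico 0 T) (n : ℤ) :
    fCoeff (fun θ => k θ t - (fCoeff (fun x => k x t) 0).re) n
      = if n = 0 then 0 else fCoeff (fun x => k x t) n := by
  rw [fCoeff_sub (f := fun θ => k θ t) ((k_smt h).sm ht).cont continuous_const, fCoeff_const]
  split_ifs with hn
  · subst hn; rw [← fCoeff_zero_real, sub_self]
  · rw [sub_zero]

lemma f_nrm_le (h : IsPCSF p T k ψ) {t : ℝ} (ht : t ∈ Ico 0 T) (m : ℕ) :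
    nrm m (fun θ => k θ t - (fCoeff (fun x => k x t) 0).re) ≤ nrm m (fun θ => k θ t) := by
  refine nrm_le fun n => ?_
  rw [f_coeff h ht]
  split_ifs with hn
  · rw [norm_zero, mul_zero]; exact nrm_nonneg _ _
  · exact le_nrm ((k_smt h).sm ht) m n

lemma f_nrm_le2 (h : IsPCSF p T k ψ) {t : ℝ} (ht : t ∈ Ico 0 T) (m : ℕ) :
    nrm m (fun θ => k θ t - (fCoeff (fun x => k x t) 0).re) * rho k t ≤ nrm m (fun θ => kk k t θ - 1) := by
  have r := rho_pos h ht
  rw [← le_div_iff₀ r]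
  refine nrm_le fun n => ?_
  rw [f_coeff h ht, le_div_iff₀ r]
  split_ifs with hn
  · rw [norm_zero, mul_zero, zero_mul]; exact nrm_nonneg _ _
  · have := le_nrm ((kk_sm h ht).sub (Sm.const 1)) m n
    rw [fCoeff_sub (kk_sm h ht).cont continuous_const, fCoeff_one, if_neg hn, sub_zero] at this
    have e : fCoeff (kk k t) n = rho k t * fCoeff (fun x => k x t) n := fCoeff_smul (rho k t) (fun x => k x t) n
    rw [e, norm_mul, Complex.norm_real, Real.norm_of_nonneg r.le] at this
    linarith

lemma cl_le {f : ℝ → ℝ} (hf : Sm f) (l : ℕ) : ClNorm l f ≤ SS * nrm (l + 2) f := by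
  have : Nonempty (Icc (0:ℝ) (2 * Real.pi)) := ⟨⟨0, le_rfl, by positivity⟩⟩
  refine ciSup_le fun j => ciSup_le fun θ => (sup_iter_le hf j θ).trans ?_
  exact mul_le_mul_of_nonneg_left (nrm_mono hf (by have := j.2; omega)) SS_nonneg

lemma semi_le {f : ℝ → ℝ} (hf : Sm f) (n : ℤ) : (n:ℝ)^2 * ‖fCoeff f n‖ ≤ 2 * seminorm2 f := by
  have b : ∀ g : ℂ → ℝ, (∀ z, |g z| ≤ ‖z‖) →
      BddAbove (range fun n : ℤ => (n:ℝ)^2 * |g (fCoeff f n)|) := by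
    intro g hg
    obtain ⟨C, hC⟩ := nrm_bdd hf 2
    refine ⟨C, ?_⟩
    rintro _ ⟨n, rfl⟩
    refine le_trans ?_ (hC ⟨n, rfl⟩)
    have h1 : (n:ℝ)^2 ≤ jb n ^ 2 := by rw [← sq_abs]; exact pow_le_pow_left₀ (abs_nonneg _) (abs_le_jb n) 2
    exact mul_le_mul h1 (hg _) (abs_nonneg _) (by positivity)
  have h1 := (le_ciSup (b Complex.re Complex.abs_re_le_norm) n).trans (le_max_left _
    (⨆ n : ℤ, (n : ℝ)^2 * |(fCoeff f n).im|))
  have h2 := (le_ciSup (b Complex.im Complex.abs_im_le_norm) n).trans (le_max_right 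
    (⨆ n : ℤ, (n : ℝ)^2 * |(fCoeff f n).re|) _)
  have h3 := Complex.norm_le_abs_re_add_abs_im (fCoeff f n)
  change _ ≤ seminorm2 f at h1 h2
  have h4 := mul_le_mul_of_nonneg_left h3 (sq_nonneg (n:ℝ))
  rw [mul_add] at h4
  linarith

/-- smallness of the initial datum -/
lemma init_small (h : IsPCSF p T k ψ) (hT : 0 < T) {δ C η cp : ℝ} (hC : 1 ≤ C) (hη : 0 < η)
    (hη1 : η ≤ 1) (hcp0 : 0 < cp)
    (hal : ∀ ε κ : ℝ → ℝ, Sm ε → Sm κ → (∀ θ, κ θ * (1 + ε θ) = 1) → nrm 2 ε ≤ δ →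
      nrm 2 (fun θ => κ θ - 1) ≤ C * nrm 2 ε)
    (h1 : 2 / cp ≤ δ) (h2 : 8 * C / cp ≤ η) (hψ : cp * seminorm2 ψ ≤ (fCoeff ψ 0).re) :
    nrm 2 (ee k 0) ≤ η / 2 := by
  have hT0 : (0:ℝ) ∈ Ico 0 T := ⟨le_rfl, hT⟩
  have sψ : Sm ψ := ⟨h.2.2.2.2.2.1, h.2.2.2.2.2.2.2.1⟩
  have ek : ∀ θ, k θ 0 = ψ θ := h.2.2.2.2.1
  have pψ : ∀ θ, 0 < ψ θ := h.2.2.2.2.2.2.1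
  set c := (fCoeff ψ 0).re with hc
  have c0 : 0 < c := fCoeff_zero_pos sψ.cont pψ
  have r0 := rho_pos h hT0
  have sr := (r_smt h).sm hT0
  have sε : Sm (fun θ => c⁻¹ * ψ θ - 1) := ((Sm.const _).mul sψ).sub (Sm.const 1)
  have sκ : Sm (fun θ => c * rr k θ 0) := (Sm.const c).mul sr
  have nε : nrm 2 (fun θ => c⁻¹ * ψ θ - 1) ≤ 2 / cp := by
    refine nrm_le fun n => ?_
    rw [fCoeff_sub ((Sm.const c⁻¹).mul sψ).cont continuous_const, fCoeff_smul, fCoeff_one]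
    by_cases hn : n = 0
    · subst hn
      rw [if_pos rfl, fCoeff_zero_real, ← hc]
      have : (c:ℂ) ≠ 0 := by exact_mod_cast c0.ne'
      push_cast
      rw [inv_mul_cancel₀ this, sub_self, norm_zero, mul_zero]; positivity
    · rw [if_neg hn, sub_zero, jb_ne hn, sq_abs, norm_mul, Complex.norm_real,
        Real.norm_of_nonneg (by positivity)]
      have a1 := semi_le sψ n
      have a2 : seminorm2 ψ ≤ c / cp := by rw [le_div_iff₀ hcp0]; linarith
      calc _ = c⁻¹ * ((n:ℝ)^2 * ‖fCoeff ψ n‖) := by ring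
        _ ≤ c⁻¹ * (2 * (c / cp)) := mul_le_mul_of_nonneg_left (by linarith) (by positivity)
        _ = _ := by field_simp
  have al := hal _ _ sε sκ (fun θ => by
    have := (pψ θ).ne'
    simp only [rr, ek]; field_simp; ring) (nε.trans h1)
  have nκ : nrm 2 (fun θ => c * rr k θ 0 - 1) ≤ η / 4 := by
    calc _ ≤ _ := al
      _ ≤ C * (2 / cp) := by gcongr
      _ = (8 * C / cp) / 4 := by ring
      _ ≤ _ := by linarith
  have sκ1 : Sm (fun θ => c * rr k θ 0 - 1) := sκ.sub (Sm.const 1)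
  have hco : ∀ n, fCoeff (fun θ => c * rr k θ 0 - 1) n
      = c * fCoeff (fun θ => rr k θ 0) n - if n = 0 then 1 else 0 := by
    intro n
    rw [fCoeff_sub sκ.cont continuous_const, fCoeff_smul, fCoeff_one]
  have half : 1 / 2 ≤ c * rho k 0 := by
    have a1 := (le_nrm sκ1 2 0).trans nκ
    rw [hco, if_pos rfl, fCoeff_zero_real, jb_zero, one_pow, one_mul] at a1
    have a2 : ‖((c * rho k 0 - 1 : ℝ) : ℂ)‖ ≤ η / 4 := by push_cast; exact a1
    rw [Complex.norm_real, Real.norm_eq_abs, abs_le] at a2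
    linarith
  refine nrm_le fun n => ?_
  by_cases hn : n = 0
  · subst hn
    rw [ee_coeff_zero h hT0, norm_zero, mul_zero]; positivity
  · have a1 := (le_nrm sκ1 2 n).trans nκ
    rw [hco, if_neg hn, sub_zero, norm_mul, Complex.norm_real, Real.norm_of_nonneg c0.le] at a1
    rw [ee_coeff h hT0 hn, norm_mul, norm_inv, Complex.norm_real, Real.norm_of_nonneg r0.le]
    have hj := jb_pos n
    have a3 : (rho k 0)⁻¹ ≤ 2 * c := by
      rw [inv_le_iff_one_le_mul₀ r0]; linarith
    calc _ ≤ jb n ^ 2 * (2 * c * ‖fCoeff (fun θ => rr k θ 0) n‖) := by gcongr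
      _ = 2 * (jb n ^ 2 * (c * ‖fCoeff (fun θ => rr k θ 0) n‖)) := by ring
      _ ≤ _ := by linarith
end

/-- There is `c_p > 0` depending only on `p` such that if `ψ̂(0) ≥ c_p ‖ψ‖₂`,
then for every `l` there is `M_{p,l} > 0` with
`‖k(·,t) - k̂(0,t)‖_{C^l[0,2π]} ≤ M_{p,l}(T-t)^{(3p-2)/(p+1)}` for all `t ∈ [0,T)`. -/
theorem statement12 (p : ℕ) (hp : 1 ≤ p) :
    ∃ cp > (0:ℝ), ∀ (T : ℝ), 0 < T → ∀ (k : ℝ → ℝ → ℝ) (ψ : ℝ → ℝ),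
      IsPCSF p T k ψ →
      cp * seminorm2 ψ ≤ (fCoeff ψ 0).re →
      ∀ l : ℕ, ∃ M > (0:ℝ), ∀ t : ℝ, 0 ≤ t → t < T →
        ClNorm l (fun θ => k θ t - (fCoeff (fun x => k x t) 0).re)
          ≤ M * (T - t) ^ ((3 * (p : ℝ) - 2) / ((p : ℝ) + 1)) := by
  obtain ⟨δ, hδ, C, hC, hal⟩ := alg p (le_refl 2)
  have p1 : (1:ℝ) ≤ p := by exact_mod_cast hp
  have hη : 0 < min δ (1 / (12 * C)) := by positivity
  have hηδ : min δ (1 / (12 * C)) ≤ δ := min_le_left _ _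
  have hηC : min δ (1 / (12 * C)) ≤ 1 / (12 * C) := min_le_right _ _
  generalize min δ (1 / (12 * C)) = η at hη hηδ hηC
  rw [le_div_iff₀ (by positivity)] at hηC
  refine ⟨max (2 / δ) (8 * C / η), by positivity, ?_⟩
  intro T hT k ψ h hψ l
  have hcp : 0 < max (2 / δ) (8 * C / η) := by positivity
  have hη1 : η ≤ 1 := by nlinarith
  have hT0 : (0:ℝ) ∈ Ico 0 T := ⟨le_rfl, hT⟩
  have h0 : nrm 2 (ee k 0) ≤ η / 2 := by
    refine init_small h hT hC hη hη1 hcp (fun ε κ a b c d => (hal ε κ a b c d).1) ?_ ?_ hψ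
    · rw [div_le_iff₀ hcp, mul_comm δ, ← div_le_iff₀ hδ]; exact le_max_left _ _
    · rw [div_le_iff₀ hcp, mul_comm η, ← div_le_iff₀ hη]; exact le_max_right _ _
  have one := pass_one hp h hη hC (by linarith)
    (fun t ht ht2 => (hal _ _ (ee_sm h ht) (kk_sm h ht) (kk_ee h ht) (ht2.trans hηδ)).2.1) h0 hT
  have hl := rho_tendsto h hT fun t ht =>
    (hal _ _ (ee_sm h ht) (kk_sm h ht) (kk_ee h ht) ((one t ht).1.trans hηδ)).2.2
  have hrate := rho_rate hp h hT hl fun t ht => (one t ht).2.2.1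
  obtain ⟨δm, hδm, Cm, hCm, halm⟩ := alg p (show 2 ≤ l + 2 by omega)
  have r0 := rho_pos h hT0
  have n0 := nrm_nonneg (ee k 0) 2
  have hK : 0 < nrm 2 (ee k 0) / rho k 0 + 1 := by positivity
  have heK : ∀ t ∈ Ico 0 T, nrm 2 (ee k t) ≤ (nrm 2 (ee k 0) / rho k 0 + 1) * rho k t := by
    intro t ht
    have := (one t ht).2.1
    have := rho_pos h ht
    linarith
  obtain ⟨t0, ht0, B, hB, two⟩ := pass_two hp h hT hl (fun t ht => (one t ht).2.2.1) hK heK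
    (fun t ht => (one t ht).2.2.2.trans (heK t ht)) (l + 2) hδm hCm
    (fun t ht ht2 => (halm _ _ (ee_sm h ht) (kk_sm h ht) (kk_ee h ht) ht2).2.1)
  obtain ⟨D, hD⟩ := (k_smt h).unif ht0.2 (l + 2)
  have hD0 : 0 ≤ D := (nrm_nonneg _ _).trans (hD 0 ⟨le_rfl, ht0.1⟩)
  set α : ℝ := (3 * (p : ℝ) - 2) / ((p : ℝ) + 1) with hα
  have hα0 : 0 ≤ α := div_nonneg (by linarith) (by linarith)
  have hTt : 0 < (T - t0) ^ α := Real.rpow_pos_of_pos (by linarith [ht0.2]) _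
  have hS := SS_nonneg
  have h3 : 0 < (3:ℝ) ^ α := by positivity
  refine ⟨SS * (D / (T - t0) ^ α) + SS * (Cm * B * 3 ^ α) + 1, by positivity, fun t ht htT => ?_⟩
  have htI : t ∈ Ico 0 T := ⟨ht, htT⟩
  have hpw : 0 ≤ (T - t) ^ α := Real.rpow_nonneg (by linarith) _
  refine (cl_le (f_sm h htI) l).trans ?_
  rcases le_or_gt t t0 with hle | hlt
  · have a1 := (f_nrm_le h htI (l + 2)).trans (hD t ⟨ht, hle⟩)
    have a2 : (T - t0) ^ α ≤ (T - t) ^ α := Real.rpow_le_rpow (by linarith [ht0.2]) (by linarith) hα0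
    calc _ ≤ SS * D := by gcongr
      _ = SS * (D / (T - t0) ^ α) * (T - t0) ^ α := by field_simp
      _ ≤ SS * (D / (T - t0) ^ α) * (T - t) ^ α := by gcongr
      _ ≤ _ := by
        apply mul_le_mul_of_nonneg_right _ hpw
        have : 0 ≤ SS * (Cm * B * 3 ^ α) := by positivity
        linarith
  · obtain ⟨b1, b2⟩ := two t ⟨hlt.le, htT⟩
    have r := rho_pos h htI
    have b3 := (f_nrm_le2 h htI (l + 2)).trans
      (halm _ _ (ee_sm h htI) (kk_sm h htI) (kk_ee h htI) b1).1
    have b4 : nrm (l+2) (fun θ => k θ t - (fCoeff (fun x => k x t) 0).re) ≤ Cm * B * rho k t ^ (3 * p - 2) := by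
      have e : rho k t ^ (3 * p) = rho k t ^ (3 * p - 2) * rho k t ^ 2 := by
        rw [← pow_add]; congr 1; omega
      refine le_of_mul_le_mul_right ?_ (show 0 < rho k t ^ 2 by positivity)
      calc _ = (nrm (l+2) (fun θ => k θ t - (fCoeff (fun x => k x t) 0).re) * rho k t) * rho k t := by ring
        _ ≤ (Cm * nrm (l+2) (ee k t)) * rho k t := by gcongr
        _ = Cm * (nrm (l+2) (ee k t) * rho k t) := by ring
        _ ≤ Cm * (B * rho k t ^ (3 * p)) := by gcongr
        _ = _ := by rw [e]; ring
    have b5 : rho k t ^ (3 * p - 2) ≤ 3 ^ α * (T - t) ^ α := by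
      rw [← Real.mul_rpow (by norm_num) (by linarith)]
      have e : rho k t ^ (3 * p - 2) = (rho k t ^ (p+1)) ^ α := by
        rw [← Real.rpow_natCast, ← Real.rpow_natCast, ← Real.rpow_mul r.le]
        congr 1
        rw [hα, Nat.cast_sub (by omega)]
        push_cast
        field_simp
      rw [e]
      exact Real.rpow_le_rpow (by positivity) (hrate t htI) hα0
    calc _ ≤ SS * (Cm * B * (3 ^ α * (T - t) ^ α)) := by
          refine mul_le_mul_of_nonneg_left (b4.trans ?_) hS
          gcongr
      _ = SS * (Cm * B * 3 ^ α) * (T - t) ^ α := by ring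
      _ ≤ _ := by
        apply mul_le_mul_of_nonneg_right _ hpw
        have : 0 ≤ SS * (D / (T - t0) ^ α) := by positivity
        linarith
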